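/- (Countermodel construction.) If mℓIGL ⊬ R, Γ ⇒ Δ (i.e. there is no ∞-proof of the labelled sequent R, Γ ⇒ Δ in mℓIK4), then there exist a Kripke structure K in pred-IGL, a world w and a w-environment ρ such that for every labelled formula x:A: if x:A ∈ Γ then K, w ⊨^ρ ⟨A⟩ₓ, and if x:A ∈ Δ then K, w ⊭^ρ ⟨A⟩ₓ. -/

import Mathlib

namespace IGL

/-- Modal formulas over propositional symbols indexed by naturals. -/
inductive Formula : Type
  | atom : ℕ → Formula
  | bot  : Formula
  | and  : Formula → Formula → Formula
  | or   : Formula → Formula → Formula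
  | imp  : Formula → Formula → Formula
  | box  : Formula → Formula
  | dia  : Formula → Formula

/-- ¬A abbreviates A → ⊥. -/
def Formula.neg (A : Formula) : Formula := Formula.imp A Formula.bot

/-- Löb's axiom □(□A→A)→□A. -/
def lobAx (A : Formula) : Formula :=
  Formula.imp (Formula.box (Formula.imp (Formula.box A) A)) (Formula.box A)

/-- Boolean evaluation of a formula, treating modal (sub)formulas and atoms as
propositional atoms; used to define substitution instances of classical
propositional tautologies. -/
def evalCPL (v : Formula → Bool) : Formula → Bool
  | Formula.atom n  => v (Formula.atom n)
  | Formula.bot     => false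
  | Formula.and A B => evalCPL v A && evalCPL v B
  | Formula.or  A B => evalCPL v A || evalCPL v B
  | Formula.imp A B => !evalCPL v A || evalCPL v B
  | Formula.box A   => v (Formula.box A)
  | Formula.dia A   => v (Formula.dia A)

/-- A (substitution instance of a) theorem of classical propositional logic. -/
def Taut (A : Formula) : Prop := ∀ v, evalCPL v A = true

/-- The modal logic K: classical propositional logic, axiom k, modus ponens, necessitation. -/
inductive KProof : Formula → Prop
  | taut {A : Formula} : Taut A → KProof A
  | axK (A B : Formula) :
      KProof (Formula.imp (Formula.box (Formula.imp A B))
        (Formula.imp (Formula.box A) (Formula.box B)))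
  | mp {A B : Formula} : KProof (Formula.imp A B) → KProof A → KProof B
  | nec {A : Formula} : KProof A → KProof (Formula.box A)

/-- The modal logic K4: K plus axiom 4. -/
inductive K4Proof : Formula → Prop
  | taut {A : Formula} : Taut A → K4Proof A
  | axK (A B : Formula) :
      K4Proof (Formula.imp (Formula.box (Formula.imp A B))
        (Formula.imp (Formula.box A) (Formula.box B)))
  | ax4 (A : Formula) :
      K4Proof (Formula.imp (Formula.box A) (Formula.box (Formula.box A)))
  | mp {A B : Formula} : K4Proof (Formula.imp A B) → K4Proof A → K4Proof B
  | nec {A : Formula} : K4Proof A → K4Proof (Formula.box A)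

/-- Gödel–Löb logic GL: K4 plus Löb's axiom. -/
inductive GLProof : Formula → Prop
  | taut {A : Formula} : Taut A → GLProof A
  | axK (A B : Formula) :
      GLProof (Formula.imp (Formula.box (Formula.imp A B))
        (Formula.imp (Formula.box A) (Formula.box B)))
  | ax4 (A : Formula) :
      GLProof (Formula.imp (Formula.box A) (Formula.box (Formula.box A)))
  | axLob (A : Formula) : GLProof (lobAx A)
  | mp {A B : Formula} : GLProof (Formula.imp A B) → GLProof A → GLProof B
  | nec {A : Formula} : GLProof A → GLProof (Formula.box A)

/-- Classical relational (Kripke) satisfaction. -/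
def sat {W : Type} (R : W → W → Prop) (V : W → ℕ → Prop) : W → Formula → Prop
  | w, Formula.atom n  => V w n
  | _, Formula.bot     => False
  | w, Formula.and A B => sat R V w A ∧ sat R V w B
  | w, Formula.or  A B => sat R V w A ∨ sat R V w B
  | w, Formula.imp A B => sat R V w A → sat R V w B
  | w, Formula.box A   => ∀ v, R w v → sat R V v A
  | w, Formula.dia A   => ∃ v, R w v ∧ sat R V v A

/-- A frame satisfies `A` if every model based on it satisfies `A` at every world. -/
def FrameSat (W : Type) (R : W → W → Prop) (A : Formula) : Prop :=
  ∀ (V : W → ℕ → Prop) (w : W), sat R V w A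

/-- A relation is terminating if it admits no infinite path. -/
def Terminating {α : Type} (r : α → α → Prop) : Prop :=
  ¬ ∃ f : ℕ → α, ∀ n, r (f n) (f (n + 1))

/-! ### Labelled sequents -/

/-- A labelled formula `x : A`. -/
abbrev LFormula := ℕ × Formula

/-- A labelled sequent `R, Γ ⇒ Δ`: a set of relational atoms and two
multisets of labelled formulas. -/
structure Sequent : Type where
  rel : Set (ℕ × ℕ)
  left : Multiset LFormula
  right : Multiset LFormula

/-- Variables occurring in a set of relational atoms. -/
def relVars (R : Set (ℕ × ℕ)) : Set ℕ := {z | ∃ w, (z, w) ∈ R ∨ (w, z) ∈ R}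

/-- Labels occurring in a multiset of labelled formulas. -/
def mLabels (Γ : Multiset LFormula) : Set ℕ := {z | ∃ A, (z, A) ∈ Γ}

/-- The variables/labels occurring in a sequent. -/
def Sequent.vars (S : Sequent) : Set ℕ := relVars S.rel ∪ mLabels S.left ∪ mLabels S.right

/-- `y` is a fresh label for the sequent `S`. -/
def Fresh (y : ℕ) (S : Sequent) : Prop := y ∉ S.vars

/-- A sequent has exactly one formula on the right-hand side. -/
def SingleRHS (S : Sequent) : Prop := Multiset.card S.right = 1

/-- Rule instances of the standard labelled calculi, presented as a relation
between a conclusion and its list of premisses.  The flag `tr` enables the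
transitivity rule (giving ℓK4 rather than ℓK), the flag `thn` enables the
relational thinning rule `th`, and the flag `ir` imposes the restriction that
the →-right and □-right rules have exactly one formula on the RHS (giving the
multi-succedent intuitionistic system mℓIK4). -/
inductive Rule (tr thn ir : Bool) : Sequent → List Sequent → Prop
  | id (R : Set (ℕ × ℕ)) (x p : ℕ) :
      Rule tr thn ir ⟨R, {(x, Formula.atom p)}, {(x, Formula.atom p)}⟩ []
  | cut (R : Set (ℕ × ℕ)) (Γ Γ' Δ Δ' : Multiset LFormula) (x : ℕ) (A : Formula) :
      Rule tr thn ir ⟨R, Γ + Γ', Δ + Δ'⟩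
        [⟨R, Γ, (x, A) ::ₘ Δ⟩, ⟨R, (x, A) ::ₘ Γ', Δ'⟩]
  | wkL (R : Set (ℕ × ℕ)) (Γ Δ : Multiset LFormula) (x : ℕ) (A : Formula) :
      Rule tr thn ir ⟨R, (x, A) ::ₘ Γ, Δ⟩ [⟨R, Γ, Δ⟩]
  | wkR (R : Set (ℕ × ℕ)) (Γ Δ : Multiset LFormula) (x : ℕ) (A : Formula) :
      Rule tr thn ir ⟨R, Γ, (x, A) ::ₘ Δ⟩ [⟨R, Γ, Δ⟩]
  | ctrL (R : Set (ℕ × ℕ)) (Γ Δ : Multiset LFormula) (x : ℕ) (A : Formula) :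
      Rule tr thn ir ⟨R, (x, A) ::ₘ Γ, Δ⟩ [⟨R, (x, A) ::ₘ (x, A) ::ₘ Γ, Δ⟩]
  | ctrR (R : Set (ℕ × ℕ)) (Γ Δ : Multiset LFormula) (x : ℕ) (A : Formula) :
      Rule tr thn ir ⟨R, Γ, (x, A) ::ₘ Δ⟩ [⟨R, Γ, (x, A) ::ₘ (x, A) ::ₘ Δ⟩]
  | th (R R' : Set (ℕ × ℕ)) (Γ Δ : Multiset LFormula) :
      thn = true → Rule tr thn ir ⟨R ∪ R', Γ, Δ⟩ [⟨R, Γ, Δ⟩]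
  | botL (R : Set (ℕ × ℕ)) (Γ Δ : Multiset LFormula) (x : ℕ) :
      Rule tr thn ir ⟨R, (x, Formula.bot) ::ₘ Γ, Δ⟩ []
  | impL (R : Set (ℕ × ℕ)) (Γ Γ' Δ Δ' : Multiset LFormula) (x : ℕ) (A B : Formula) :
      Rule tr thn ir ⟨R, (x, Formula.imp A B) ::ₘ (Γ + Γ'), Δ + Δ'⟩
        [⟨R, Γ, (x, A) ::ₘ Δ⟩, ⟨R, (x, B) ::ₘ Γ', Δ'⟩]
  | impR (R : Set (ℕ × ℕ)) (Γ Δ : Multiset LFormula) (x : ℕ) (A B : Formula) :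
      (ir = true → Δ = 0) →
      Rule tr thn ir ⟨R, Γ, (x, Formula.imp A B) ::ₘ Δ⟩ [⟨R, (x, A) ::ₘ Γ, (x, B) ::ₘ Δ⟩]
  | andL₁ (R : Set (ℕ × ℕ)) (Γ Δ : Multiset LFormula) (x : ℕ) (A B : Formula) :
      Rule tr thn ir ⟨R, (x, Formula.and A B) ::ₘ Γ, Δ⟩ [⟨R, (x, A) ::ₘ Γ, Δ⟩]
  | andL₂ (R : Set (ℕ × ℕ)) (Γ Δ : Multiset LFormula) (x : ℕ) (A B : Formula) :
      Rule tr thn ir ⟨R, (x, Formula.and A B) ::ₘ Γ, Δ⟩ [⟨R, (x, B) ::ₘ Γ, Δ⟩]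
  | orL (R : Set (ℕ × ℕ)) (Γ Δ : Multiset LFormula) (x : ℕ) (A B : Formula) :
      Rule tr thn ir ⟨R, (x, Formula.or A B) ::ₘ Γ, Δ⟩
        [⟨R, (x, A) ::ₘ Γ, Δ⟩, ⟨R, (x, B) ::ₘ Γ, Δ⟩]
  | orR₁ (R : Set (ℕ × ℕ)) (Γ Δ : Multiset LFormula) (x : ℕ) (A B : Formula) :
      Rule tr thn ir ⟨R, Γ, (x, Formula.or A B) ::ₘ Δ⟩ [⟨R, Γ, (x, A) ::ₘ Δ⟩]
  | orR₂ (R : Set (ℕ × ℕ)) (Γ Δ : Multiset LFormula) (x : ℕ) (A B : Formula) :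
      Rule tr thn ir ⟨R, Γ, (x, Formula.or A B) ::ₘ Δ⟩ [⟨R, Γ, (x, B) ::ₘ Δ⟩]
  | andR (R : Set (ℕ × ℕ)) (Γ Δ : Multiset LFormula) (x : ℕ) (A B : Formula) :
      Rule tr thn ir ⟨R, Γ, (x, Formula.and A B) ::ₘ Δ⟩
        [⟨R, Γ, (x, A) ::ₘ Δ⟩, ⟨R, Γ, (x, B) ::ₘ Δ⟩]
  | diaL (R : Set (ℕ × ℕ)) (Γ Δ : Multiset LFormula) (x y : ℕ) (A : Formula) :
      Fresh y ⟨R, (x, Formula.dia A) ::ₘ Γ, Δ⟩ →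
      Rule tr thn ir ⟨R, (x, Formula.dia A) ::ₘ Γ, Δ⟩
        [⟨insert (x, y) R, (y, A) ::ₘ Γ, Δ⟩]
  | diaR (R : Set (ℕ × ℕ)) (Γ Δ : Multiset LFormula) (x y : ℕ) (A : Formula) :
      (x, y) ∈ R →
      Rule tr thn ir ⟨R, Γ, (x, Formula.dia A) ::ₘ Δ⟩ [⟨R, Γ, (y, A) ::ₘ Δ⟩]
  | boxR (R : Set (ℕ × ℕ)) (Γ Δ : Multiset LFormula) (x y : ℕ) (A : Formula) :
      (ir = true → Δ = 0) →
      Fresh y ⟨R, Γ, (x, Formula.box A) ::ₘ Δ⟩ →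
      Rule tr thn ir ⟨R, Γ, (x, Formula.box A) ::ₘ Δ⟩
        [⟨insert (x, y) R, Γ, (y, A) ::ₘ Δ⟩]
  | boxL (R : Set (ℕ × ℕ)) (Γ Δ : Multiset LFormula) (x y : ℕ) (A : Formula) :
      (x, y) ∈ R →
      Rule tr thn ir ⟨R, (x, Formula.box A) ::ₘ Γ, Δ⟩ [⟨R, (y, A) ::ₘ Γ, Δ⟩]
  | trans (R : Set (ℕ × ℕ)) (Γ Δ : Multiset LFormula) (x y z : ℕ) :
      tr = true → (x, y) ∈ R → (y, z) ∈ R →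
      Rule tr thn ir ⟨R, Γ, Δ⟩ [⟨insert (x, z) R, Γ, Δ⟩]

/-- The labelled calculus ℓK. -/
def RuleLK : Sequent → List Sequent → Prop := Rule false true false

/-- The labelled calculus ℓK4 (= ℓK + transitivity rule). -/
def RuleLK4 : Sequent → List Sequent → Prop := Rule true true false

/-- ℓK4 without the thinning rule th. -/
def RuleLK4NoTh : Sequent → List Sequent → Prop := Rule true false false

/-- The multi-succedent intuitionistic calculus mℓIK4: ℓK4 where the →-right
and □-right rules must have exactly one formula on the RHS. -/
def RuleMLIK4 : Sequent → List Sequent → Prop := Rule true true true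

/-- The single-succedent intuitionistic calculus ℓIK4: the restriction of ℓK4
to sequents with exactly one formula on the RHS. -/
def RuleLIK4 : Sequent → List Sequent → Prop :=
  fun S ps => RuleLK4 S ps ∧ SingleRHS S ∧ ∀ p ∈ ps, SingleRHS p

/-- ℓIK4 without the thinning rule th. -/
def RuleLIK4NoTh : Sequent → List Sequent → Prop :=
  fun S ps => RuleLK4NoTh S ps ∧ SingleRHS S ∧ ∀ p ∈ ps, SingleRHS p

/-- Finite (wellfounded) derivability from a set of rule instances. -/
inductive Deriv (rule : Sequent → List Sequent → Prop) : Sequent → Prop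
  | step (S : Sequent) (prems : List Sequent) :
      rule S prems → (∀ S' ∈ prems, Deriv rule S') → Deriv rule S

/-! ### Non-wellfounded proofs -/

/-- A (possibly infinite) preproof of `S₀`: a tree of sequents, given as a
partial labelling of finite paths (lists of child indices), whose root is `S₀`
and in which every node is the conclusion of a rule instance whose premisses
are exactly its children. -/
structure Preproof (rule : Sequent → List Sequent → Prop) (S₀ : Sequent) : Type where
  node : List ℕ → Option Sequent
  root : node [] = some S₀
  children : ∀ p S, node p = some S →
    ∃ prems : List Sequent, rule S prems ∧ ∀ i : ℕ, node (p ++ [i]) = prems[i]?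

/-- The path of length `n` along the branch determined by `f`. -/
def branchPath (f : ℕ → ℕ) (n : ℕ) : List ℕ := (List.range n).map f

/-- An infinite sequence of sequents (a branch) has a progressing trace:
from some point on there are labels `x i` occurring in the `i`-th sequent with
either `x (i+1) = x i` or the relational atom `(x i) R (x (i+1))` occurring in
the `i`-th sequent, the latter happening infinitely often. -/
def Progressing (Sb : ℕ → Sequent) : Prop :=
  ∃ (k : ℕ) (x : ℕ → ℕ),
    (∀ i, k ≤ i → x i ∈ (Sb i).vars) ∧
    (∀ i, k ≤ i → x (i + 1) = x i ∨ (x i, x (i + 1)) ∈ (Sb i).rel) ∧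
    (∀ n, ∃ i, n ≤ i ∧ k ≤ i ∧ (x i, x (i + 1)) ∈ (Sb i).rel)

/-- `S₀` has an ∞-proof: a preproof all of whose infinite branches have a
progressing trace. -/
def InfProof (rule : Sequent → List Sequent → Prop) (S₀ : Sequent) : Prop :=
  ∃ P : Preproof rule S₀,
    ∀ (f : ℕ → ℕ) (Sb : ℕ → Sequent),
      (∀ n, P.node (branchPath f n) = some (Sb n)) → Progressing Sb

/-! ### Birelational semantics -/

/-- A birelational model on the set of worlds `W`: an intuitionistic partial
order `le`, an accessibility relation `acc` satisfying the frame conditions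
(F1) and (F2), and a monotone valuation. -/
structure Birel (W : Type) : Type where
  le : W → W → Prop
  le_refl : ∀ w, le w w
  le_trans : ∀ u v w, le u v → le v w → le u w
  le_antisymm : ∀ u v, le u v → le v u → u = v
  acc : W → W → Prop
  F1 : ∀ w w' v, le w w' → acc w v → ∃ v', le v v' ∧ acc w' v'
  F2 : ∀ w v v', acc w v → le v v' → ∃ w', le w w' ∧ acc w' v'
  val : W → ℕ → Prop
  val_mono : ∀ w w', le w w' → ∀ p, val w p → val w' p

/-- Birelational satisfaction. -/
def bsat {W : Type} (B : Birel W) : W → Formula → Prop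
  | w, Formula.atom p  => B.val w p
  | _, Formula.bot     => False
  | w, Formula.and A C => bsat B w A ∧ bsat B w C
  | w, Formula.or  A C => bsat B w A ∨ bsat B w C
  | w, Formula.imp A C => ∀ w', B.le w w' → bsat B w' A → bsat B w' C
  | w, Formula.box A   => ∀ w' v, B.le w w' → B.acc w' v → bsat B v A
  | w, Formula.dia A   => ∃ v, B.acc w v ∧ bsat B v A

/-- Membership in the class birel-IGL: the accessibility relation is
transitive and the composite ≤;R is terminating. -/
def BirelIGL {W : Type} (B : Birel W) : Prop :=
  Transitive B.acc ∧ Terminating (fun u v => ∃ m, B.le u m ∧ B.acc m v)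

/-- An interpretation of a sequent into a birelational model: a map on labels
sending relational atoms of the sequent to accessibility-related worlds. -/
def Interp {W : Type} (B : Birel W) (I : ℕ → W) (S : Sequent) : Prop :=
  ∀ x y, (x, y) ∈ S.rel → B.acc (I x) (I y)

/-- `B, I ⊨ S`. -/
def seqSat {W : Type} (B : Birel W) (I : ℕ → W) (S : Sequent) : Prop :=
  (∀ q ∈ S.left, bsat B (I q.1) q.2) → ∃ q ∈ S.right, bsat B (I q.1) q.2

/-- `B ⊨ S`: satisfaction under every interpretation. -/
def seqValid {W : Type} (B : Birel W) (S : Sequent) : Prop :=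
  ∀ I : ℕ → W, Interp B I S → seqSat B I S

/-- Conjunction of a nonempty list of formulas `A ∧ B₁ ∧ ... ∧ Bₙ`. -/
def conjList : Formula → List Formula → Formula
  | A, [] => A
  | A, B :: l => Formula.and A (conjList B l)

/-! ### (Quasi-)trees -/

/-- A set of relational atoms is a tree: there is a root from which every
other variable is reachable by a unique path of relational atoms. -/
def IsTree (R : Set (ℕ × ℕ)) : Prop :=
  ∃ x₀ ∈ relVars R, ∀ x ∈ relVars R, x ≠ x₀ →
    ∃! l : List ℕ, l ≠ [] ∧ List.Chain (fun a b => (a, b) ∈ R) x₀ l ∧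
      l.getLast? = some x

/-- A quasi-tree: squeezed between a tree and its transitive closure. -/
def IsQuasiTree (R : Set (ℕ × ℕ)) : Prop :=
  ∃ R₀ : Set (ℕ × ℕ), IsTree R₀ ∧ R₀ ⊆ R ∧
    ∀ q ∈ R, Relation.TransGen (fun a b => (a, b) ∈ R₀) q.1 q.2

/-- The (single-succedent) sequent `R, Γ ⇒ x:A` is quasi-tree-like. -/
def QuasiTreeLike (R : Set (ℕ × ℕ)) (Γ : Multiset LFormula) (x : ℕ) : Prop :=
  (R = ∅ ∧ mLabels Γ ⊆ {x}) ∨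
  (IsQuasiTree R ∧ mLabels Γ ∪ {x} ⊆ relVars R)

/-! ### Kripke predicate structures -/

/-- A Kripke (predicate) structure: partially ordered worlds, growing nonempty
domains, monotone interpretations of the unary predicates, and growing binary
relations on the domains. -/
structure Kripke (W D : Type) : Type where
  le : W → W → Prop
  le_refl : ∀ w, le w w
  le_trans : ∀ u v w, le u v → le v w → le u w
  le_antisymm : ∀ u v, le u v → le v u → u = v
  Dom : W → Set D
  Dom_ne : ∀ w, (Dom w).Nonempty
  Dom_mono : ∀ w w', le w w' → Dom w ⊆ Dom w'
  Pr : W → ℕ → Set D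
  Pr_sub : ∀ w p, Pr w p ⊆ Dom w
  Pr_mono : ∀ w w' p, le w w' → Pr w p ⊆ Pr w' p
  Rel : W → D → D → Prop
  Rel_dom : ∀ w d e, Rel w d e → d ∈ Dom w ∧ e ∈ Dom w
  Rel_mono : ∀ w w' d e, le w w' → Rel w d e → Rel w' d e

/-- Satisfaction `K, w ⊨^ρ ⟨A⟩ₓ` of the standard translation of `A`; since the
translation of `A` at `x` has only `x` free, satisfaction is presented through
the value `d = ρ x` of the environment at `x`. -/
def ksat {W D : Type} (K : Kripke W D) : W → D → Formula → Prop
  | w, d, Formula.atom p  => d ∈ K.Pr w p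
  | _, _, Formula.bot     => False
  | w, d, Formula.and A B => ksat K w d A ∧ ksat K w d B
  | w, d, Formula.or  A B => ksat K w d A ∨ ksat K w d B
  | w, d, Formula.imp A B => ∀ w', K.le w w' → ksat K w' d A → ksat K w' d B
  | w, d, Formula.box A   => ∀ w' e, K.le w w' → K.Rel w' d e → ksat K w' e A
  | w, d, Formula.dia A   => ∃ e, K.Rel w d e ∧ ksat K w e A

/-- Membership in the class pred-IGL: each `R_w` is transitive and the
composite `≤_{D_W} ; R_{D_W}` on pairs `(w, d)` with `d ∈ D_w` is terminating. -/
def PredIGL {W D : Type} (K : Kripke W D) : Prop :=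
  (∀ w, Transitive (K.Rel w)) ∧
  ¬ ∃ (f : ℕ → W) (g : ℕ → D),
      ∀ n, g n ∈ K.Dom (f n) ∧ K.le (f n) (f (n + 1)) ∧
        K.Rel (f (n + 1)) (g n) (g (n + 1))


theorem progressing_shift {Sb : ℕ → Sequent} (h : Progressing (fun i => Sb (i + 1))) :
    Progressing Sb := by
  obtain ⟨k, x, h1, h2, h3⟩ := h
  refine ⟨k + 1, fun i => x (i - 1), ?_, ?_, ?_⟩
  · intro i hi
    obtain ⟨j, rfl⟩ : ∃ j, i = j + 1 := ⟨i - 1, by omega⟩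
    simpa using h1 j (by omega)
  · intro i hi
    obtain ⟨j, rfl⟩ : ∃ j, i = j + 1 := ⟨i - 1, by omega⟩
    simpa using h2 j (by omega)
  · intro n
    obtain ⟨i, hi, hk, hr⟩ := h3 n
    exact ⟨i + 1, by omega, by omega, by simpa using hr⟩

theorem build_inf {M : Type} (rule : Sequent → List Sequent → Prop) (seq : M → Sequent)
    (succ : M → List M) (hs : ∀ m, rule (seq m) ((succ m).map seq)) (m0 : M)
    (hp : ∀ s : ℕ → M, s 0 = m0 → (∀ t, s (t + 1) ∈ succ (s t)) → Progressing (seq ∘ s)) :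
    InfProof rule (seq m0) := by
  let walk : List ℕ → Option M :=
    fun p => p.foldl (fun o i => o.bind (fun m => (succ m)[i]?)) (some m0)
  have hw : ∀ p i, walk (p ++ [i]) = (walk p).bind (fun m => (succ m)[i]?) := by
    intro p i; simp [walk]
  refine ⟨⟨fun p => (walk p).map seq, by simp [walk], ?_⟩, ?_⟩
  · intro p S h
    simp only [Option.map_eq_some_iff] at h
    obtain ⟨m, hm, rfl⟩ := h
    refine ⟨_, hs m, fun i => ?_⟩
    rw [hw, hm]; simp
  · intro f Sb h
    simp only [Option.map_eq_some_iff] at h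
    choose s hs1 hs2 using h
    have : Sb = seq ∘ s := by funext n; simp [hs2]
    rw [this]
    refine hp s ?_ ?_
    · have := hs1 0
      simp [branchPath, walk] at this
      exact this.symm
    · intro t
      have h1 := hs1 (t + 1)
      have : branchPath f (t + 1) = branchPath f t ++ [f t] := by
        simp [branchPath, List.range_succ]
      rw [this, hw, hs1 t] at h1
      exact List.mem_of_getElem? h1

theorem inf_th (S : Sequent) (h : InfProof RuleMLIK4 ⟨∅, S.left, S.right⟩) :
    InfProof RuleMLIK4 S := by
  obtain ⟨P, hP⟩ := h
  refine ⟨⟨fun p => match p with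
    | [] => some S
    | 0 :: p => P.node p
    | (_ + 1) :: _ => none, rfl, ?_⟩, ?_⟩
  · rintro (_ | ⟨_ | j, p⟩) T hT
    · simp at hT
      subst hT
      refine ⟨[⟨∅, S.left, S.right⟩], ?_, ?_⟩
      · have := Rule.th (tr := true) (thn := true) (ir := true) ∅ S.rel S.left S.right rfl
        simpa [RuleMLIK4] using this
      · rintro (_ | i)
        · simpa using P.root
        · simp
    · exact P.children p T hT
    · simp at hT
  · intro f Sb h
    apply progressing_shift
    have h1 := h 1
    have hf : f 0 = 0 := by
      rcases hf : f 0 with _ | j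
      · rfl
      · simp [branchPath, hf] at h1
    apply hP (fun i => f (i + 1))
    intro n
    have h2 := h (n + 1)
    have : branchPath f (n + 1) = 0 :: branchPath (fun i => f (i + 1)) n := by
      simp only [branchPath, List.range_succ_eq_map, List.map_cons, hf, List.map_map]
      rfl
    rw [this] at h2
    exact h2



structure Entry : Type where
  S : Sequent
  D : List ℕ

def topD : List Entry → List ℕ
  | [] => []
  | e :: _ => e.D

structure Hom (f : ℕ → ℕ) (S S' : Sequent) : Prop where
  rel : ∀ x y, (x, y) ∈ S.rel → (f x, f y) ∈ S'.rel
  left : ∀ x A, (x, A) ∈ S.left → (f x, A) ∈ S'.left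
  right : ∀ x A, (x, A) ∈ S.right → (f x, A) ∈ S'.right

inductive J : ℕ → List Entry → Sequent → Prop
  | rule {n : ℕ} {h : List Entry} {S : Sequent} {prems : List Sequent} :
      Rule true false true S prems →
      (∀ p ∈ prems, ∀ x y, (x, y) ∈ p.rel → y ∉ S.vars → y ∉ topD h) →
      (∀ p ∈ prems, J n h p) → J (n + 1) h S
  | push {n : ℕ} {h : List Entry} {S : Sequent} (D : List ℕ) :
      topD h <+: D → J n (⟨S, D⟩ :: h) S → J (n + 1) h S
  | wk {n : ℕ} {h h' : List Entry} {S S' : Sequent} (f : ℕ → ℕ) :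
      h' <:+ h → Hom f S S' → (∀ x ∈ topD h', f x = x) → J n h' S → J (n + 1) h S'
  | jump {n : ℕ} {h h' : List Entry} {S : Sequent} (e : Entry) (f : ℕ → ℕ) (p : ℕ)
      (hp : p < e.D.length) :
      (e :: h') <:+ h → Hom f e.S S → (∀ x ∈ e.D.take p, f x = x) →
      (e.D[p], f e.D[p]) ∈ S.rel → J n h S

inductive LinN : ℕ → Sequent → Sequent → Prop
  | zero (S : Sequent) : LinN 0 S S
  | succ {k : ℕ} {S T U : Sequent} :
      Rule true true true S [T] → T.rel = S.rel → LinN k T U → LinN (k + 1) S U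

theorem LinN.trans {k l : ℕ} {S T U : Sequent} (h : LinN k S T) (h' : LinN l T U) :
    ∃ m, LinN m S U := by
  induction h with
  | zero => exact ⟨_, h'⟩
  | succ a b _ ih =>
    obtain ⟨m, hm⟩ := ih h'
    exact ⟨m + 1, LinN.succ a b hm⟩

theorem lin_ctrL (R : Set (ℕ × ℕ)) (Δ Γ' : Multiset LFormula) :
    ∀ Γ : Multiset LFormula, (∀ a ∈ Γ', a ∈ Γ) → ∃ k, LinN k ⟨R, Γ, Δ⟩ ⟨R, Γ' + Γ, Δ⟩ := by
  induction Γ' using Multiset.induction_on with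
  | empty => intro Γ _; exact ⟨0, by simpa using LinN.zero _⟩
  | cons a Γ' ih =>
    intro Γ h
    obtain ⟨Γ0, rfl⟩ := Multiset.exists_cons_of_mem (h a (by simp))
    obtain ⟨k, hk⟩ := ih (a ::ₘ a ::ₘ Γ0) (fun b hb => by
      have := h b (by simp [hb]); simp at this ⊢; exact this)
    have e : a ::ₘ Γ' + a ::ₘ Γ0 = Γ' + a ::ₘ a ::ₘ Γ0 := by simp
    rw [e]
    exact ⟨k + 1, LinN.succ (Rule.ctrL R Γ0 Δ a.1 a.2) rfl hk⟩

theorem lin_ctrR (R : Set (ℕ × ℕ)) (Δ Γ' : Multiset LFormula) :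
    ∀ Γ : Multiset LFormula, (∀ a ∈ Γ', a ∈ Γ) → ∃ k, LinN k ⟨R, Δ, Γ⟩ ⟨R, Δ, Γ' + Γ⟩ := by
  induction Γ' using Multiset.induction_on with
  | empty => intro Γ _; exact ⟨0, by simpa using LinN.zero _⟩
  | cons a Γ' ih =>
    intro Γ h
    obtain ⟨Γ0, rfl⟩ := Multiset.exists_cons_of_mem (h a (by simp))
    obtain ⟨k, hk⟩ := ih (a ::ₘ a ::ₘ Γ0) (fun b hb => by
      have := h b (by simp [hb]); simp at this ⊢; exact this)
    have e : a ::ₘ Γ' + a ::ₘ Γ0 = Γ' + a ::ₘ a ::ₘ Γ0 := by simp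
    rw [e]
    exact ⟨k + 1, LinN.succ (Rule.ctrR R Δ Γ0 a.1 a.2) rfl hk⟩

theorem lin_wkL (R : Set (ℕ × ℕ)) (Δ Γ' Γ : Multiset LFormula) :
    ∃ k, LinN k ⟨R, Γ' + Γ, Δ⟩ ⟨R, Γ', Δ⟩ := by
  induction Γ using Multiset.induction_on with
  | empty => exact ⟨0, by simpa using LinN.zero _⟩
  | cons a Γ ih =>
    obtain ⟨k, hk⟩ := ih
    rw [Multiset.add_cons]
    exact ⟨k + 1, LinN.succ (Rule.wkL R _ Δ a.1 a.2) rfl hk⟩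

theorem lin_wkR (R : Set (ℕ × ℕ)) (Δ Γ' Γ : Multiset LFormula) :
    ∃ k, LinN k ⟨R, Δ, Γ' + Γ⟩ ⟨R, Δ, Γ'⟩ := by
  induction Γ using Multiset.induction_on with
  | empty => exact ⟨0, by simpa using LinN.zero _⟩
  | cons a Γ ih =>
    obtain ⟨k, hk⟩ := ih
    rw [Multiset.add_cons]
    exact ⟨k + 1, LinN.succ (Rule.wkR R Δ _ a.1 a.2) rfl hk⟩

theorem lin_of_mem (R : Set (ℕ × ℕ)) (Γ Γ' Δ Δ' : Multiset LFormula)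
    (h1 : ∀ a ∈ Γ', a ∈ Γ) (h2 : ∀ a ∈ Δ', a ∈ Δ) :
    ∃ k, LinN k ⟨R, Γ, Δ⟩ ⟨R, Γ', Δ'⟩ := by
  obtain ⟨_, a⟩ := lin_ctrL R Δ Γ' Γ h1
  obtain ⟨_, b⟩ := lin_wkL R Δ Γ' Γ
  obtain ⟨_, c⟩ := lin_ctrR R Γ' Δ' Δ h2
  obtain ⟨_, d⟩ := lin_wkR R Γ' Δ' Δ
  obtain ⟨_, e⟩ := a.trans b
  obtain ⟨_, f⟩ := c.trans d
  exact e.trans f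

def lab (ρ : ℕ → ℕ) (a : LFormula) : LFormula := (ρ a.1, a.2)

def actual (ρ : ℕ → ℕ) (Ra : Set (ℕ × ℕ)) (S : Sequent) : Sequent :=
  ⟨Ra, S.left.map (lab ρ), S.right.map (lab ρ)⟩

theorem vars_finite (S : Sequent) (h : S.rel.Finite) : S.vars.Finite := by
  have h1 : (relVars S.rel).Finite := by
    apply ((h.image Prod.fst).union (h.image Prod.snd)).subset
    rintro z ⟨w, hw | hw⟩
    · exact Or.inl ⟨_, hw, rfl⟩
    · exact Or.inr ⟨_, hw, rfl⟩
  have h2 : ∀ Γ : Multiset LFormula, (mLabels Γ).Finite := by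
    intro Γ
    classical
    apply ((Γ.map Prod.fst).toFinset.finite_toSet).subset
    rintro z ⟨A, hA⟩
    simp only [Finset.mem_coe, Multiset.mem_toFinset, Multiset.mem_map]
    exact ⟨_, hA, rfl⟩
  exact (h1.union (h2 _)).union (h2 _)

theorem map_lab_congr {ρ ρ' : ℕ → ℕ} {Γ : Multiset LFormula}
    (h : ∀ x A, (x, A) ∈ Γ → ρ x = ρ' x) : Γ.map (lab ρ) = Γ.map (lab ρ') := by
  apply Multiset.map_congr rfl
  rintro ⟨x, A⟩ hx
  simp [lab, h x A hx]

theorem rule_sim {S : Sequent} {prems : List Sequent} (hr : Rule true false true S prems)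
    (T : List ℕ)
    (hf : ∀ p ∈ prems, ∀ x y, (x, y) ∈ p.rel → y ∉ S.vars → y ∉ T)
    (ρ : ℕ → ℕ) (Ra : Set (ℕ × ℕ)) (hfin : Ra.Finite)
    (hρ : ∀ x y, (x, y) ∈ S.rel → (ρ x, ρ y) ∈ Ra) :
    ∃ l : List (Sequent × (ℕ → ℕ) × Set (ℕ × ℕ)),
      Rule true true true (actual ρ Ra S) (l.map (fun q => actual q.2.1 q.2.2 q.1)) ∧
      ∀ q ∈ l, q.1 ∈ prems ∧ Ra ⊆ q.2.2 ∧ q.2.2.Finite ∧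
        (∀ x y, (x, y) ∈ q.1.rel → (q.2.1 x, q.2.1 y) ∈ q.2.2) ∧
        ∀ x ∈ T, q.2.1 x = ρ x := by
  have plain : (∀ p ∈ prems, p.rel = S.rel) →
      Rule true true true (actual ρ Ra S) (prems.map (actual ρ Ra)) →
      ∃ l : List (Sequent × (ℕ → ℕ) × Set (ℕ × ℕ)),
      Rule true true true (actual ρ Ra S) (l.map (fun q => actual q.2.1 q.2.2 q.1)) ∧
      ∀ q ∈ l, q.1 ∈ prems ∧ Ra ⊆ q.2.2 ∧ q.2.2.Finite ∧
        (∀ x y, (x, y) ∈ q.1.rel → (q.2.1 x, q.2.1 y) ∈ q.2.2) ∧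
        ∀ x ∈ T, q.2.1 x = ρ x := by
    intro h1 h2
    refine ⟨prems.map (fun p => (p, ρ, Ra)), by simpa [Function.comp_def] using h2, ?_⟩
    intro q hq
    simp only [List.mem_map] at hq
    obtain ⟨p, hp, rfl⟩ := hq
    refine ⟨hp, subset_rfl, hfin, ?_, fun _ _ => rfl⟩
    intro x y hxy
    exact hρ x y (h1 p hp ▸ hxy)
  cases hr with
  | id R x p => exact plain (by simp) (by simpa [actual, lab] using Rule.id Ra (ρ x) p)
  | cut R Γ Γ' Δ Δ' x A =>
    exact plain (by simp) (by
      simpa [actual, lab] using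
          Rule.cut Ra (Γ.map (lab ρ)) (Γ'.map (lab ρ)) (Δ.map (lab ρ)) (Δ'.map (lab ρ)) (ρ x) A)
  | wkL R Γ Δ x A =>
    exact plain (by simp) (by
      simpa [actual, lab] using
          Rule.wkL Ra (Γ.map (lab ρ)) (Δ.map (lab ρ)) (ρ x) A)
  | wkR R Γ Δ x A =>
    exact plain (by simp) (by
      simpa [actual, lab] using
          Rule.wkR Ra (Γ.map (lab ρ)) (Δ.map (lab ρ)) (ρ x) A)
  | ctrL R Γ Δ x A =>
    exact plain (by simp) (by
      simpa [actual, lab] using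
          Rule.ctrL Ra (Γ.map (lab ρ)) (Δ.map (lab ρ)) (ρ x) A)
  | ctrR R Γ Δ x A =>
    exact plain (by simp) (by
      simpa [actual, lab] using
          Rule.ctrR Ra (Γ.map (lab ρ)) (Δ.map (lab ρ)) (ρ x) A)
  | th R R' Γ Δ h => simp at h
  | botL R Γ Δ x =>
    exact plain (by simp) (by
      simpa [actual, lab] using
          Rule.botL Ra (Γ.map (lab ρ)) (Δ.map (lab ρ)) (ρ x))
  | impL R Γ Γ' Δ Δ' x A B =>
    exact plain (by simp) (by
      simpa [actual, lab] using
          Rule.impL Ra (Γ.map (lab ρ)) (Γ'.map (lab ρ)) (Δ.map (lab ρ)) (Δ'.map (lab ρ)) (ρ x) A B)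
  | impR R Γ Δ x A B h =>
    obtain rfl := h rfl
    exact plain (by simp) (by
      simpa [actual, lab] using
          Rule.impR Ra (Γ.map (lab ρ)) 0 (ρ x) A B (fun _ => rfl))
  | andL₁ R Γ Δ x A B =>
    exact plain (by simp) (by
      simpa [actual, lab] using
          Rule.andL₁ Ra (Γ.map (lab ρ)) (Δ.map (lab ρ)) (ρ x) A B)
  | andL₂ R Γ Δ x A B =>
    exact plain (by simp) (by
      simpa [actual, lab] using
          Rule.andL₂ Ra (Γ.map (lab ρ)) (Δ.map (lab ρ)) (ρ x) A B)
  | orL R Γ Δ x A B =>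
    exact plain (by simp) (by
      simpa [actual, lab] using
          Rule.orL Ra (Γ.map (lab ρ)) (Δ.map (lab ρ)) (ρ x) A B)
  | orR₁ R Γ Δ x A B =>
    exact plain (by simp) (by
      simpa [actual, lab] using
          Rule.orR₁ Ra (Γ.map (lab ρ)) (Δ.map (lab ρ)) (ρ x) A B)
  | orR₂ R Γ Δ x A B =>
    exact plain (by simp) (by
      simpa [actual, lab] using
          Rule.orR₂ Ra (Γ.map (lab ρ)) (Δ.map (lab ρ)) (ρ x) A B)
  | andR R Γ Δ x A B =>
    exact plain (by simp) (by
      simpa [actual, lab] using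
          Rule.andR Ra (Γ.map (lab ρ)) (Δ.map (lab ρ)) (ρ x) A B)
  | diaR R Γ Δ x y A h =>
    exact plain (by simp) (by
      simpa [actual, lab] using
          Rule.diaR Ra (Γ.map (lab ρ)) (Δ.map (lab ρ)) (ρ x) (ρ y) A (hρ _ _ h))
  | boxL R Γ Δ x y A h =>
    exact plain (by simp) (by
      simpa [actual, lab] using
          Rule.boxL Ra (Γ.map (lab ρ)) (Δ.map (lab ρ)) (ρ x) (ρ y) A (hρ _ _ h))
  | trans R Γ Δ x y z _ h1 h2 =>
    refine ⟨[(⟨insert (x, z) R, Γ, Δ⟩, ρ, insert (ρ x, ρ z) Ra)], ?_, ?_⟩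
    · have := Rule.trans (tr := true) (thn := true) (ir := true) Ra (Γ.map (lab ρ)) (Δ.map (lab ρ))
        (ρ x) (ρ y) (ρ z) rfl (hρ _ _ h1) (hρ _ _ h2)
      simpa only [actual, List.map_cons, List.map_nil] using this
    · simp only [List.mem_singleton, forall_eq, true_and]
      refine ⟨Set.subset_insert _ _, hfin.insert _, ?_, fun _ _ => by simp⟩
      rintro a b hab
      rcases hab with hab | hab
      · left; simp only [Prod.mk.injEq] at hab; simp [hab.1, hab.2]
      · right; exact hρ _ _ hab
  | diaL R Γ Δ x y A hfr =>
    obtain ⟨y', hy'⟩ := (vars_finite (actual ρ Ra ⟨R, (x, A.dia) ::ₘ Γ, Δ⟩) hfin).exists_notMem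
    have hyT : y ∉ T := hf _ (List.mem_singleton.2 rfl) x y (Set.mem_insert _ _) hfr
    have hx : x ≠ y := by
      rintro rfl; apply hfr; left; right; exact ⟨_, Multiset.mem_cons_self _ _⟩
    have e1 : Γ.map (lab (Function.update ρ y y')) = Γ.map (lab ρ) := map_lab_congr (by
      intro a B hB
      rw [Function.update_of_ne]; rintro rfl; apply hfr; left; right
      exact ⟨B, Multiset.mem_cons_of_mem hB⟩)
    have e2 : Δ.map (lab (Function.update ρ y y')) = Δ.map (lab ρ) := map_lab_congr (by
      intro a B hB
      rw [Function.update_of_ne]; rintro rfl; apply hfr; right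
      exact ⟨B, hB⟩)
    refine ⟨[(⟨insert (x, y) R, (y, A) ::ₘ Γ, Δ⟩, Function.update ρ y y',
      insert (ρ x, y') Ra)], ?_, ?_⟩
    · have := Rule.diaL (tr := true) (thn := true) (ir := true) Ra (Γ.map (lab ρ)) (Δ.map (lab ρ))
        (ρ x) y' A (by simpa [Fresh, actual, lab] using hy')
      simp only [actual, List.map_cons, List.map_nil, Multiset.map_cons, e1, e2]
      simpa [lab] using this
    · simp only [List.mem_singleton, forall_eq, true_and]
      refine ⟨Set.subset_insert _ _, hfin.insert _, ?_, ?_⟩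
      · rintro a b (hab | hab)
        · simp only [Prod.mk.injEq] at hab
          left; simp [hab.1, hab.2, Function.update_of_ne hx]
        · right
          have ha : a ≠ y := by rintro rfl; apply hfr; left; left; exact ⟨b, Or.inl hab⟩
          have hb : b ≠ y := by rintro rfl; apply hfr; left; left; exact ⟨a, Or.inr hab⟩
          rw [Function.update_of_ne ha, Function.update_of_ne hb]
          exact hρ _ _ hab
      · intro a ha
        rw [Function.update_of_ne]; rintro rfl; exact hyT ha
  | boxR R Γ Δ x y A hΔ hfr =>
    obtain rfl := hΔ rfl
    obtain ⟨y', hy'⟩ := (vars_finite (actual ρ Ra ⟨R, Γ, (x, A.box) ::ₘ 0⟩) hfin).exists_notMem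
    have hyT : y ∉ T := hf _ (List.mem_singleton.2 rfl) x y (Set.mem_insert _ _) hfr
    have hx : x ≠ y := by
      rintro rfl; apply hfr; right; exact ⟨A.box, Multiset.mem_cons_self (x, A.box) 0⟩
    have e1 : Γ.map (lab (Function.update ρ y y')) = Γ.map (lab ρ) := map_lab_congr (by
      intro a B hB
      rw [Function.update_of_ne]; rintro rfl; apply hfr; left; right
      exact ⟨B, hB⟩)
    refine ⟨[(⟨insert (x, y) R, Γ, (y, A) ::ₘ 0⟩, Function.update ρ y y',
      insert (ρ x, y') Ra)], ?_, ?_⟩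
    · have := Rule.boxR (tr := true) (thn := true) (ir := true) Ra (Γ.map (lab ρ)) 0
        (ρ x) y' A (fun _ => rfl) (by simpa [Fresh, actual, lab] using hy')
      simp only [actual, List.map_cons, List.map_nil, Multiset.map_cons, e1]
      simpa [lab] using this
    · simp only [List.mem_singleton, forall_eq, true_and]
      refine ⟨Set.subset_insert _ _, hfin.insert _, ?_, ?_⟩
      · rintro a b (hab | hab)
        · simp only [Prod.mk.injEq] at hab
          left; simp [hab.1, hab.2, Function.update_of_ne hx]
        · right
          have ha : a ≠ y := by rintro rfl; apply hfr; left; left; exact ⟨b, Or.inl hab⟩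
          have hb : b ≠ y := by rintro rfl; apply hfr; left; left; exact ⟨a, Or.inr hab⟩
          rw [Function.update_of_ne ha, Function.update_of_ne hb]
          exact hρ _ _ hab
      · intro a ha
        rw [Function.update_of_ne]; rintro rfl; exact hyT ha



structure St : Type where
  hist : List (Entry × ℕ)
  n : ℕ
  k : ℕ
  S : Sequent
  ρ : ℕ → ℕ
  Sa : Sequent

def hE (h : List (Entry × ℕ)) : List Entry := h.map Prod.fst

def EnvOK : List (Entry × ℕ) → Prop
  | [] => True
  | a :: r => J a.2 (a.1 :: hE r) a.1.S ∧ topD (hE r) <+: a.1.D ∧ EnvOK r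

theorem EnvOK.suffix {h h' : List (Entry × ℕ)} (hs : h' <:+ h) (ho : EnvOK h) : EnvOK h' := by
  induction h with
  | nil => simp at hs; subst hs; exact ho
  | cons a r ih =>
    rcases List.suffix_cons_iff.1 hs with rfl | h1
    · exact ho
    · exact ih h1 ho.2.2

theorem EnvOK.topD_prefix {h h' : List (Entry × ℕ)} (hs : h' <:+ h) (ho : EnvOK h) :
    topD (hE h') <+: topD (hE h) := by
  induction h with
  | nil => simp at hs; subst hs; exact List.prefix_rfl
  | cons a r ih =>
    rcases List.suffix_cons_iff.1 hs with rfl | h1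
    · exact List.prefix_rfl
    · exact (ih h1 ho.2.2).trans ho.2.1

structure Good (m : St) : Prop where
  lin : LinN m.k m.Sa (actual m.ρ m.Sa.rel m.S)
  fin : m.Sa.rel.Finite
  rel : ∀ x y, (x, y) ∈ m.S.rel → (m.ρ x, m.ρ y) ∈ m.Sa.rel
  j : J m.n (hE m.hist) m.S
  env : EnvOK m.hist

def StrictAt (D : List ℕ) (p : ℕ) (m m' : St) : Prop :=
  ∃ hp : p < D.length, (∀ x ∈ D.take p, m'.ρ x = m.ρ x) ∧ (m.ρ D[p], m'.ρ D[p]) ∈ m.Sa.rel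

def StepA (m m' : St) : Prop :=
  m'.hist <:+ m.hist ∧ (m'.n < m.n ∨ m'.n = m.n ∧ m'.k < m.k) ∧
    ∀ x ∈ topD (hE m'.hist), m'.ρ x = m.ρ x

def StepB (m m' : St) : Prop :=
  ∃ e : Entry, m'.hist = (e, m'.n) :: m.hist ∧ m'.n < m.n ∧ m'.ρ = m.ρ

def StepC (m m' : St) : Prop :=
  ∃ (e : Entry) (r : List (Entry × ℕ)), m'.hist = (e, m'.n) :: r ∧ m'.hist <:+ m.hist ∧
    ∃ p, StrictAt e.D p m m'

def StepR (m m' : St) : Prop :=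
  m.Sa.rel ⊆ m'.Sa.rel ∧ (StepA m m' ∨ StepB m m' ∨ StepC m m')

theorem suffix_map_hE {h' : List Entry} {h : List (Entry × ℕ)} (hs : h' <:+ hE h) :
    ∃ g, g <:+ h ∧ hE g = h' := by
  refine ⟨h.drop (h.length - h'.length), List.drop_suffix _ _, ?_⟩
  have := List.suffix_iff_eq_drop.1 hs
  rw [this]
  simp [hE, List.map_drop]
  have hl : h'.length ≤ h.length := by simpa [hE] using hs.length_le
  omega

theorem dummy (S : Sequent) : Rule true true true S [S] := by
  have := Rule.th (tr := true) (thn := true) (ir := true) S.rel ∅ S.left S.right rfl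
  simpa using this

theorem LinN.zero_eq {S T : Sequent} (h : LinN 0 S T) : S = T := by
  generalize hk : 0 = k at h
  cases h with
  | zero => rfl
  | succ => omega

theorem lin_hom {f ρ : ℕ → ℕ} {S S' : Sequent} (R : Set (ℕ × ℕ)) (h : Hom f S S') :
    ∃ k, LinN k (actual ρ R S') (actual (ρ ∘ f) R S) := by
  apply lin_of_mem
  · intro a ha
    obtain ⟨⟨x, A⟩, hx, rfl⟩ := Multiset.mem_map.1 ha
    exact Multiset.mem_map.2 ⟨_, h.left x A hx, rfl⟩
  · intro a ha
    obtain ⟨⟨x, A⟩, hx, rfl⟩ := Multiset.mem_map.1 ha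
    exact Multiset.mem_map.2 ⟨_, h.right x A hx, rfl⟩

theorem step_exists (m : {m : St // Good m}) :
    ∃ l : List {m : St // Good m}, RuleMLIK4 m.1.Sa (l.map (fun q => q.1.Sa)) ∧
      ∀ m' ∈ l, StepR m.1 m'.1 := by
  obtain ⟨⟨hist, n, k, S, ρ, Sa⟩, hg⟩ := m
  obtain ⟨hlin, hfin, hrel, hj, henv⟩ := hg
  dsimp only at hlin hfin hrel hj henv ⊢
  rcases k with _ | k
  swap
  · cases hlin with
    | succ hr he hl =>
      rename_i T
      refine ⟨[⟨⟨hist, n, k, S, ρ, T⟩, ⟨?_, ?_, ?_, hj, henv⟩⟩], hr, ?_⟩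
      · dsimp only; rw [he]; exact hl
      · dsimp only; rw [he]; exact hfin
      · dsimp only; rw [he]; exact hrel
      · simp only [List.mem_singleton, forall_eq]
        exact ⟨he.symm.subset, Or.inl ⟨List.suffix_rfl, Or.inr ⟨rfl, Nat.lt_succ_self _⟩,
          fun _ _ => rfl⟩⟩
  have hSa : Sa = actual ρ Sa.rel S := LinN.zero_eq hlin
  have aux : ∀ m' : {m : St // Good m}, m'.1.Sa = Sa →
      (StepA ⟨hist, n, 0, S, ρ, Sa⟩ m'.1 ∨ StepB ⟨hist, n, 0, S, ρ, Sa⟩ m'.1 ∨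
        StepC ⟨hist, n, 0, S, ρ, Sa⟩ m'.1) →
      ∃ l : List {m : St // Good m}, RuleMLIK4 Sa (l.map (fun q => q.1.Sa)) ∧
      ∀ m' ∈ l, StepR ⟨hist, n, 0, S, ρ, Sa⟩ m'.1 := by
    intro m' h1 h2
    refine ⟨[m'], ?_, ?_⟩
    · simpa [h1, RuleMLIK4] using dummy Sa
    · simp only [List.mem_singleton, forall_eq]
      exact ⟨by rw [h1], h2⟩
  cases hj with
  | rule hr hf hprem =>
    rename_i n prems
    obtain ⟨l, hl1, hl2⟩ := rule_sim hr _ hf ρ Sa.rel hfin hrel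
    rw [← hSa] at hl1
    refine ⟨l.attach.map (fun q => ⟨⟨hist, n, 0, q.1.1, q.1.2.1, actual q.1.2.1 q.1.2.2 q.1.1⟩,
      ⟨LinN.zero _, (hl2 q.1 q.2).2.2.1, (hl2 q.1 q.2).2.2.2.1, hprem _ (hl2 q.1 q.2).1, henv⟩⟩),
      ?_, ?_⟩
    · rw [List.map_map]
      have : (l.attach.map ((fun q : {m : St // Good m} => q.1.Sa) ∘
        (fun q => ⟨⟨hist, n, 0, q.1.1, q.1.2.1, actual q.1.2.1 q.1.2.2 q.1.1⟩,
      ⟨LinN.zero _, (hl2 q.1 q.2).2.2.1, (hl2 q.1 q.2).2.2.2.1, hprem _ (hl2 q.1 q.2).1, henv⟩⟩)))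
        = l.map (fun q => actual q.2.1 q.2.2 q.1) := by
        conv_rhs => rw [← List.attach_map_subtype_val l, List.map_map]
        rfl
      rw [this]; exact hl1
    · intro m' hm'
      obtain ⟨q, _, rfl⟩ := List.mem_map.1 hm'
      exact ⟨(hl2 q.1 q.2).2.1, Or.inl ⟨List.suffix_rfl, Or.inl (Nat.lt_succ_self _),
        (hl2 q.1 q.2).2.2.2.2⟩⟩
  | push D hD hj' =>
    rename_i n
    exact aux ⟨⟨(⟨S, D⟩, n) :: hist, n, 0, S, ρ, Sa⟩, ⟨hlin, hfin, hrel, hj', ⟨hj', hD, henv⟩⟩⟩ rfl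
      (Or.inr (Or.inl ⟨_, rfl, Nat.lt_succ_self _, rfl⟩))
  | wk f hs hh hfix hj' =>
    rename_i n h' S0
    obtain ⟨g, hg1, rfl⟩ := suffix_map_hE hs
    obtain ⟨k, hk⟩ := lin_hom (ρ := ρ) Sa.rel hh
    rw [← hSa] at hk
    exact aux ⟨⟨g, n, k, S0, ρ ∘ f, Sa⟩, ⟨hk, hfin, fun x y h => hrel _ _ (hh.rel x y h), hj',
      henv.suffix hg1⟩⟩ rfl
      (Or.inl ⟨hg1, Or.inl (Nat.lt_succ_self _), fun x hx => by simp [hfix x hx]⟩)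
  | jump e f p hp hs hh hfix hmv =>
    rename_i h'
    obtain ⟨g, hg1, hg2⟩ := suffix_map_hE hs
    obtain ⟨k, hk⟩ := lin_hom (ρ := ρ) Sa.rel hh
    rw [← hSa] at hk
    rcases g with _ | ⟨⟨e', N⟩, g⟩
    · simp [hE] at hg2
    simp only [hE, List.map_cons, List.cons.injEq] at hg2
    obtain ⟨rfl, rfl⟩ := hg2
    have henv' := henv.suffix hg1
    exact aux ⟨⟨(e', N) :: g, N, k, e'.S, ρ ∘ f, Sa⟩, ⟨hk, hfin,
      fun x y h => hrel _ _ (hh.rel x y h), henv'.1, henv'⟩⟩ rfl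
      (Or.inr (Or.inr ⟨e', g, rfl, hg1, p, hp, fun x hx => by simp [hfix x hx], hrel _ _ hmv⟩))

section run
variable (s : ℕ → St)

def OKs (D : List ℕ) (u : ℕ) : Prop :=
  (∃ p, StrictAt D p (s u) (s (u + 1))) ∨ ∀ x ∈ D, (s (u + 1)).ρ x = (s u).ρ x

theorem OKs.mono {D D' : List ℕ} {u : ℕ} (h : D' <+: D) (ho : OKs s D u) : OKs s D' u := by
  obtain ⟨E, rfl⟩ := h
  rcases ho with ⟨p, hp, h1, h2⟩ | h1
  · by_cases hp' : p < D'.length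
    · left
      refine ⟨p, hp', ?_, ?_⟩
      · rwa [List.take_append_of_le_length hp'.le] at h1
      · rwa [List.getElem_append_left hp'] at h2
    · right
      intro x hx
      apply h1
      rw [List.take_append]
      rw [List.take_of_length_le (by omega)]
      simp [hx]
  · right
    intro x hx
    exact h1 x (by simp [hx])

theorem win_of (hmono : ∀ t, (s t).Sa.rel ⊆ (s (t + 1)).Sa.rel) (D : List ℕ) (t0 : ℕ)
    (hok : ∀ u, t0 ≤ u → OKs s D u)
    (hst : ∀ N, ∃ u, N ≤ u ∧ ∃ p, StrictAt D p (s u) (s (u + 1))) :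
    Progressing (fun t => (s t).Sa) := by
  classical
  have hex : ∃ p, ∀ N, ∃ u, N ≤ u ∧ StrictAt D p (s u) (s (u + 1)) := by
    by_contra hcon
    push Not at hcon
    choose N hN using hcon
    obtain ⟨u, hu, p, hp⟩ := hst ((Finset.range D.length).sup N)
    have hpl := hp.1
    exact hN p u (le_trans (Finset.le_sup (f := N) (Finset.mem_range.2 hpl)) hu) hp
  let p := Nat.find hex
  have hp : ∀ N, ∃ u, N ≤ u ∧ StrictAt D p (s u) (s (u + 1)) := Nat.find_spec hex
  have hmin : ∀ q, q < p → ∃ N, ∀ u, N ≤ u → ¬ StrictAt D q (s u) (s (u + 1)) := by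
    intro q hq
    have := Nat.find_min hex hq
    push Not at this
    exact this
  choose! N hN using hmin
  have hplen : p < D.length := by obtain ⟨u, _, h⟩ := hp 0; exact h.1
  obtain ⟨u0, hu0, hs0⟩ := hp (max t0 ((Finset.range p).sup N))
  have hmove : ∀ u, u0 ≤ u → (s (u + 1)).ρ D[p] = (s u).ρ D[p] ∨
      ((s u).ρ D[p], (s (u + 1)).ρ D[p]) ∈ (s u).Sa.rel := by
    intro u hu
    rcases hok u (le_trans (le_trans (le_max_left _ _) hu0) hu) with ⟨q, hq⟩ | h1
    · rcases lt_trichotomy q p with h | h | h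
      · exfalso
        refine hN q h u ?_ hq
        exact le_trans (Finset.le_sup (f := N) (Finset.mem_range.2 h))
          (le_trans (le_trans (le_max_right _ _) hu0) hu)
      · subst h
        exact Or.inr hq.2.2
      · left
        apply hq.2.1
        rw [List.mem_take_iff_getElem]
        exact ⟨p, by omega, rfl⟩
    · exact Or.inl (h1 _ (List.getElem_mem _))
  refine ⟨u0, fun u => (s u).ρ D[p], ?_, hmove, ?_⟩
  · intro i hi
    left; left
    induction i, hi using Nat.le_induction with
    | base => exact ⟨_, Or.inl hs0.2.2⟩
    | succ i hi ih =>
      rcases hmove i hi with h | h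
      · show (s (i + 1)).ρ D[p] ∈ _
        rw [h]
        obtain ⟨w, hw⟩ := ih
        exact ⟨w, hw.imp (fun a => hmono i a) (fun a => hmono i a)⟩
      · exact ⟨_, Or.inr (hmono i h)⟩
  · intro M
    obtain ⟨u, hu, h⟩ := hp (max M u0)
    exact ⟨u, le_trans (le_max_left _ _) hu, le_trans (le_max_right _ _) hu, h.2.2⟩

def Ret (t t' : ℕ) : Prop :=
  t < t' ∧ (s t').hist <:+ (s t).hist ∧
    (∃ e r, (s t').hist = (e, (s t').n) :: r) ∧
    (∀ u, t ≤ u → u < t' → OKs s (topD (hE (s t').hist)) u) ∧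
    ∃ p, StrictAt (topD (hE (s t').hist)) p (s (t' - 1)) (s (t' - 1 + 1))

theorem run_claim (hgood : ∀ t, Good (s t)) (hstep : ∀ t, StepR (s t) (s (t + 1))) :
    ∀ n k t, (s t).n = n → (s t).k = k →
      Progressing (fun t => (s t).Sa) ∨ ∃ t', Ret s t t' := by
  have hmono : ∀ t, (s t).Sa.rel ⊆ (s (t + 1)).Sa.rel := fun t => (hstep t).1
  intro n
  induction n using Nat.strong_induction_on with
  | _ n ihn =>
  intro k
  induction k using Nat.strong_induction_on with
  | _ k ihk =>
  intro t hn hk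
  rcases (hstep t).2 with hA | hB | hC
  · obtain ⟨h1, h2, h3⟩ := hA
    have : Progressing (fun t => (s t).Sa) ∨ ∃ t', Ret s (t + 1) t' := by
      rcases h2 with h2 | ⟨h2, h4⟩
      · exact ihn _ (hn ▸ h2) _ _ rfl rfl
      · exact ihk _ (hk ▸ h4) _ (h2.trans hn) rfl
    refine this.imp_right ?_
    rintro ⟨t', a, b, c, d, e⟩
    refine ⟨t', by omega, b.trans h1, c, ?_, e⟩
    intro u hu hu'
    rcases Nat.eq_or_lt_of_le hu with rfl | hu
    · right
      intro x hx
      exact h3 x (((hgood _).env.topD_prefix b).subset hx)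
    · exact d u hu hu'
  · obtain ⟨e, h1, h2, h3⟩ := hB
    by_cases hw : Progressing (fun t => (s t).Sa)
    · exact Or.inl hw
    by_cases hr : ∃ t', Ret s t t'
    · exact Or.inr hr
    exfalso
    let Q : ℕ → Prop := fun v => t + 1 ≤ v ∧ (s v).hist = (e, (s (t + 1)).n) :: (s t).hist ∧
      (s v).n = (s (t + 1)).n ∧ ∀ u, t + 1 ≤ u → u < v → OKs s e.D u
    have hDt : topD (hE (s t).hist) <+: e.D := by
      have := (hgood (t + 1)).env
      rw [h1] at this
      exact this.2.1
    have hQ0 : Q (t + 1) := ⟨le_rfl, h1, rfl, fun u a b => by omega⟩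
    have hQs : ∀ v, Q v → ∃ v', v < v' ∧ Q v' ∧ ∃ u, v ≤ u ∧ ∃ p, StrictAt e.D p (s u) (s (u + 1)) := by
      rintro v ⟨q0, q1, q2, q3⟩
      rcases ihn _ (hn ▸ h2) _ v q2 rfl with h | ⟨t', a, b, c, d, f⟩
      · exact absurd h hw
      rw [q1] at b
      rcases List.suffix_cons_iff.1 b with b | b
      · refine ⟨t', a, ⟨by omega, b, ?_, ?_⟩, t' - 1, by omega, ?_⟩
        · obtain ⟨e', r, hc⟩ := c
          rw [b] at hc
          simp only [List.cons.injEq, Prod.mk.injEq] at hc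
          exact hc.1.2.symm
        · intro u hu hu'
          rcases lt_or_ge u v with huv | huv
          · exact q3 u hu huv
          · have := d u huv hu'
            rw [b] at this
            exact this
        · rw [b] at f; exact f
      · exfalso
        refine hr ⟨t', by omega, b, c, ?_, f⟩
        have hpre : topD (hE (s t').hist) <+: e.D :=
          ((hgood t).env.topD_prefix b).trans hDt
        intro u hu hu'
        rcases Nat.eq_or_lt_of_le hu with rfl | hu
        · right; intro x _; rw [h3]
        rcases lt_or_ge u v with huv | huv
        · exact (q3 u hu huv).mono s hpre
        · exact d u huv hu'
    have hQN : ∀ N, ∃ v, N ≤ v ∧ Q v := by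
      intro N
      induction N with
      | zero => exact ⟨_, Nat.zero_le _, hQ0⟩
      | succ N ih =>
        obtain ⟨v, hv, hq⟩ := ih
        obtain ⟨v', hv', hq', _⟩ := hQs v hq
        exact ⟨v', by omega, hq'⟩
    apply hw
    apply win_of s hmono e.D (t + 1)
    · intro u hu
      obtain ⟨v, hv, hq⟩ := hQN (u + 1)
      exact hq.2.2.2 u hu hv
    · intro N
      obtain ⟨v, hv, hq⟩ := hQN N
      obtain ⟨_, _, _, u, hu, h⟩ := hQs v hq
      exact ⟨u, hv.trans hu, h⟩
  · obtain ⟨e, r, h1, h2, p, h3⟩ := hC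
    right
    refine ⟨t + 1, by omega, h2, ⟨e, r, h1⟩, ?_, p, ?_⟩
    · intro u hu hu'
      obtain rfl : u = t := by omega
      left
      rw [h1]
      exact ⟨p, h3⟩
    · rw [h1]; exact h3

end run

theorem J_sound {n : ℕ} {Γ Δ : Multiset LFormula} (h : J n [] ⟨∅, Γ, Δ⟩) :
    InfProof RuleMLIK4 ⟨∅, Γ, Δ⟩ := by
  choose succ h1 h2 using step_exists
  let m0 : {m : St // Good m} := ⟨⟨[], n, 0, ⟨∅, Γ, Δ⟩, id, ⟨∅, Γ, Δ⟩⟩, ⟨by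
    have : actual id ∅ ⟨∅, Γ, Δ⟩ = ⟨∅, Γ, Δ⟩ := by
      have : lab id = id := by funext a; rfl
      simp [actual, this]
    simp only [this]
    exact LinN.zero _, Set.finite_empty, by simp, h, trivial⟩⟩
  apply build_inf RuleMLIK4 (fun m : {m : St // Good m} => m.1.Sa) succ h1 m0
  intro s hs0 hs
  rcases run_claim (fun t => (s t).1) (fun t => (s t).2) (fun t => h2 _ _ (hs t)) _ _ 0 rfl rfl with
    h | ⟨t', _, b, ⟨e, r, c⟩, _⟩
  · exact h
  · exfalso
    dsimp only at b c
    rw [c, hs0] at b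
    simp [m0] at b



theorem J.up {n m : ℕ} {h : List Entry} {S : Sequent} (hj : J n h S) (hm : n ≤ m) : J m h S := by
  induction m, hm using Nat.le_induction with
  | base => exact hj
  | succ m _ ih =>
    exact J.wk id List.suffix_rfl ⟨fun _ _ h => h, fun _ _ h => h, fun _ _ h => h⟩
      (fun _ _ => rfl) ih

def Pv (H : List Entry) (R : Set (ℕ × ℕ)) (L Δ : Set LFormula) : Prop :=
  ∃ (n : ℕ) (Γ' Δ' : Multiset LFormula), J n H ⟨R, Γ', Δ'⟩ ∧ (∀ a ∈ Γ', a ∈ L) ∧ ∀ a ∈ Δ', a ∈ Δ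

theorem Pv.hom {H H' : List Entry} {R R' : Set (ℕ × ℕ)} {L L' Δ Δ' : Set LFormula}
    (h : Pv H R L Δ) (f : ℕ → ℕ) (hs : H <:+ H') (hf : ∀ x ∈ topD H, f x = x)
    (hR : ∀ x y, (x, y) ∈ R → (f x, f y) ∈ R') (hL : ∀ x A, (x, A) ∈ L → (f x, A) ∈ L')
    (hΔ : ∀ x A, (x, A) ∈ Δ → (f x, A) ∈ Δ') : Pv H' R' L' Δ' := by
  obtain ⟨n, Γ, D, hj, h1, h2⟩ := h
  refine ⟨n + 1, Γ.map (lab f), D.map (lab f), J.wk f hs ⟨hR, ?_, ?_⟩ hf hj, ?_, ?_⟩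
  · intro x A hx; exact Multiset.mem_map.2 ⟨_, hx, rfl⟩
  · intro x A hx; exact Multiset.mem_map.2 ⟨_, hx, rfl⟩
  · intro a ha
    obtain ⟨⟨x, A⟩, hx, rfl⟩ := Multiset.mem_map.1 ha
    exact hL x A (h1 _ hx)
  · intro a ha
    obtain ⟨⟨x, A⟩, hx, rfl⟩ := Multiset.mem_map.1 ha
    exact hΔ x A (h2 _ hx)

theorem Pv.mono {H H' : List Entry} {R R' : Set (ℕ × ℕ)} {L L' Δ Δ' : Set LFormula}
    (h : Pv H R L Δ) (hs : H <:+ H') (hR : R ⊆ R') (hL : L ⊆ L') (hΔ : Δ ⊆ Δ') : Pv H' R' L' Δ' :=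
  h.hom id hs (fun _ _ => rfl) (fun _ _ h => hR h) (fun _ _ h => hL h) (fun _ _ h => hΔ h)

theorem Jrule {n : ℕ} {h : List Entry} {S : Sequent} {prems : List Sequent}
    (hr : Rule true false true S prems) (hp : ∀ p ∈ prems, p.rel = S.rel)
    (hj : ∀ p ∈ prems, J n h p) : J (n + 1) h S := by
  refine J.rule hr ?_ hj
  intro p hpp x y hxy hy
  exfalso; apply hy; left; left
  rw [hp p hpp] at hxy
  exact ⟨x, Or.inr hxy⟩

theorem msplit (Γ : Multiset LFormula) (a : LFormula) (L : Set LFormula)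
    (h : ∀ b ∈ Γ, b ∈ insert a L) :
    ∃ Γ0 : Multiset LFormula, (∀ b ∈ Γ0, b ∈ L) ∧ ∀ b ∈ Γ, b ∈ a ::ₘ Γ0 := by
  classical
  refine ⟨Γ.filter (· ≠ a), ?_, ?_⟩
  · intro b hb
    rw [Multiset.mem_filter] at hb
    exact (h b hb.1).resolve_left hb.2
  · intro b hb
    by_cases hba : b = a
    · simp [hba]
    · simp [hb, hba]

theorem J.super {n : ℕ} {H : List Entry} {R : Set (ℕ × ℕ)} {Γ Γ' Δ Δ' : Multiset LFormula}
    (h : J n H ⟨R, Γ, Δ⟩) (h1 : ∀ b ∈ Γ, b ∈ Γ') (h2 : ∀ b ∈ Δ, b ∈ Δ') :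
    J (n + 1) H ⟨R, Γ', Δ'⟩ :=
  J.wk (S := ⟨R, Γ, Δ⟩) id List.suffix_rfl
    ⟨fun _ _ h => h, fun _ _ h => h1 _ h, fun _ _ h => h2 _ h⟩ (fun _ _ => rfl) h

theorem Pv.left1 {H : List Entry} {R : Set (ℕ × ℕ)} {L Δ : Set LFormula} {a : LFormula}
    (h : Pv H R (insert a L) Δ) : ∃ (n : ℕ) (Γ D : Multiset LFormula), J n H ⟨R, a ::ₘ Γ, D⟩ ∧
      (∀ b ∈ Γ, b ∈ L) ∧ ∀ b ∈ D, b ∈ Δ := by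
  obtain ⟨n, Γ, D, hj, h1, h2⟩ := h
  obtain ⟨Γ0, h3, h4⟩ := msplit Γ a L h1
  exact ⟨n + 1, Γ0, D, hj.super h4 (fun _ h => h), h3, h2⟩

theorem Pv.right1 {H : List Entry} {R : Set (ℕ × ℕ)} {L : Set LFormula} {a : LFormula}
    (h : Pv H R L {a}) : ∃ (n : ℕ) (Γ : Multiset LFormula), J n H ⟨R, Γ, a ::ₘ 0⟩ ∧
      (∀ b ∈ Γ, b ∈ L) := by
  obtain ⟨n, Γ, D, hj, h1, h2⟩ := h
  refine ⟨n + 1, Γ, hj.super (fun _ h => h) ?_, h1⟩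
  intro b hb
  have := h2 b hb
  simp at this; simp [this]

theorem Pv.two {P Q : ℕ → Prop} (hP : ∀ n m, n ≤ m → P n → P m) (hQ : ∀ n m, n ≤ m → Q n → Q m)
    {a b : ℕ} (ha : P a) (hb : Q b) : ∃ n, P n ∧ Q n :=
  ⟨max a b, hP _ _ (le_max_left _ _) ha, hQ _ _ (le_max_right _ _) hb⟩

section rules
variable {H : List Entry} {R : Set (ℕ × ℕ)} {L Δ : Set LFormula}

theorem Pv.cut {x : ℕ} {A : Formula} (h : Pv H R L {(x, A)}) (h' : Pv H R (insert (x, A) L) Δ) :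
    Pv H R L Δ := by
  obtain ⟨n, Γ, hj, h1⟩ := h.right1
  obtain ⟨m, Γ', D, hj', h1', h2'⟩ := h'.left1
  refine ⟨max n m + 1, Γ + Γ', 0 + D, Jrule (Rule.cut R Γ Γ' 0 D x A) (by simp) ?_, ?_, ?_⟩
  · simp only [List.mem_cons, List.not_mem_nil, or_false, forall_eq_or_imp, forall_eq]
    exact ⟨hj.up (le_max_left _ _), hj'.up (le_max_right _ _)⟩
  · intro a ha
    rcases Multiset.mem_add.1 ha with h | h
    · exact h1 _ h
    · exact h1' _ h
  · simpa using h2'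

theorem Pv.botL {x : ℕ} (h : (x, Formula.bot) ∈ L) : Pv H R L Δ :=
  ⟨1, (x, Formula.bot) ::ₘ 0, 0, Jrule (n := 0) (Rule.botL R 0 0 x) (by simp) (by simp),
    by simpa using h, by simp⟩

theorem Pv.left_rule {x y : ℕ} {A B : Formula} (hr : ∀ Γ D : Multiset LFormula,
      Rule true false true ⟨R, (x, A) ::ₘ Γ, D⟩ [⟨R, (y, B) ::ₘ Γ, D⟩])
    (h : (x, A) ∈ L) (h' : Pv H R (insert (y, B) L) Δ) : Pv H R L Δ := by
  obtain ⟨m, Γ', D, hj', h1', h2'⟩ := h'.left1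
  refine ⟨m + 1, (x, A) ::ₘ Γ', D, Jrule (hr _ _) (by simp) ?_, ?_, h2'⟩
  · simpa using hj'
  · intro a ha
    rcases Multiset.mem_cons.1 ha with rfl | h3
    · exact h
    · exact h1' _ h3

theorem Pv.right_rule {x y : ℕ} {A B : Formula} (hr : ∀ Γ : Multiset LFormula,
      Rule true false true ⟨R, Γ, (x, A) ::ₘ 0⟩ [⟨R, Γ, (y, B) ::ₘ 0⟩])
    (h' : Pv H R L {(y, B)}) : Pv H R L {(x, A)} := by
  obtain ⟨m, Γ', hj', h1'⟩ := h'.right1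
  refine ⟨m + 1, Γ', (x, A) ::ₘ 0, Jrule (hr _) (by simp) ?_, h1', by simp⟩
  simpa using hj'

theorem Pv.andL₁ {x : ℕ} {A B : Formula} (h : (x, A.and B) ∈ L)
    (h' : Pv H R (insert (x, A) L) Δ) : Pv H R L Δ :=
  Pv.left_rule (fun Γ D => Rule.andL₁ R Γ D x A B) h h'

theorem Pv.andL₂ {x : ℕ} {A B : Formula} (h : (x, A.and B) ∈ L)
    (h' : Pv H R (insert (x, B) L) Δ) : Pv H R L Δ :=
  Pv.left_rule (fun Γ D => Rule.andL₂ R Γ D x A B) h h'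

theorem Pv.boxL {x y : ℕ} {A : Formula} (h : (x, A.box) ∈ L) (hxy : (x, y) ∈ R)
    (h' : Pv H R (insert (y, A) L) Δ) : Pv H R L Δ :=
  Pv.left_rule (fun Γ D => Rule.boxL R Γ D x y A hxy) h h'

theorem Pv.orR₁ {x : ℕ} {A B : Formula} (h' : Pv H R L {(x, A)}) : Pv H R L {(x, A.or B)} :=
  Pv.right_rule (fun Γ => Rule.orR₁ R Γ 0 x A B) h'

theorem Pv.orR₂ {x : ℕ} {A B : Formula} (h' : Pv H R L {(x, B)}) : Pv H R L {(x, A.or B)} :=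
  Pv.right_rule (fun Γ => Rule.orR₂ R Γ 0 x A B) h'

theorem Pv.diaR {x y : ℕ} {A : Formula} (hxy : (x, y) ∈ R) (h' : Pv H R L {(y, A)}) :
    Pv H R L {(x, A.dia)} :=
  Pv.right_rule (fun Γ => Rule.diaR R Γ 0 x y A hxy) h'

theorem Pv.impR {x : ℕ} {A B : Formula} (h : Pv H R (insert (x, A) L) {(x, B)}) :
    Pv H R L {(x, A.imp B)} := by
  obtain ⟨m, Γ, D, hj, h1, h2⟩ := h.left1
  refine ⟨m + 1 + 1, Γ, (x, A.imp B) ::ₘ 0,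
    Jrule (Rule.impR R Γ 0 x A B (fun _ => rfl)) (by simp) ?_, h1, by simp⟩
  simp only [List.mem_singleton, forall_eq]
  exact hj.super (fun _ h => h) (fun b hb => by have := h2 b hb; simp at this; simp [this])

theorem Pv.andR {x : ℕ} {A B : Formula} (h : Pv H R L {(x, A)}) (h' : Pv H R L {(x, B)}) :
    Pv H R L {(x, A.and B)} := by
  obtain ⟨n, Γ, hj, h1⟩ := h.right1
  obtain ⟨m, Γ', hj', h1'⟩ := h'.right1
  refine ⟨max n m + 1 + 1, Γ + Γ', (x, A.and B) ::ₘ 0,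
    Jrule (Rule.andR R (Γ + Γ') 0 x A B) (by simp) ?_, ?_, by simp⟩
  · simp only [List.mem_cons, List.not_mem_nil, or_false, forall_eq_or_imp, forall_eq]
    refine ⟨(hj.up (le_max_left _ _)).super ?_ (fun _ h => h),
      (hj'.up (le_max_right _ _)).super ?_ (fun _ h => h)⟩
    · intro b hb; simp [hb]
    · intro b hb; simp [hb]
  · intro a ha
    rcases Multiset.mem_add.1 ha with h | h
    · exact h1 _ h
    · exact h1' _ h

theorem Pv.orL {x : ℕ} {A B : Formula} (h0 : (x, A.or B) ∈ L) (h : Pv H R (insert (x, A) L) Δ)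
    (h' : Pv H R (insert (x, B) L) Δ) : Pv H R L Δ := by
  obtain ⟨n, Γ, D, hj, h1, h2⟩ := h.left1
  obtain ⟨m, Γ', D', hj', h1', h2'⟩ := h'.left1
  refine ⟨max n m + 1 + 1, (x, A.or B) ::ₘ (Γ + Γ'), D + D',
    Jrule (Rule.orL R (Γ + Γ') (D + D') x A B) (by simp) ?_, ?_, ?_⟩
  · simp only [List.mem_cons, List.not_mem_nil, or_false, forall_eq_or_imp, forall_eq]
    refine ⟨(hj.up (le_max_left _ _)).super ?_ ?_,
      (hj'.up (le_max_right _ _)).super ?_ ?_⟩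
    · intro b hb; simp at hb; rcases hb with hb | hb <;> simp [hb]
    · intro b hb; simp [hb]
    · intro b hb; simp at hb; rcases hb with hb | hb <;> simp [hb]
    · intro b hb; simp [hb]
  · intro a ha
    rcases Multiset.mem_cons.1 ha with rfl | ha
    · exact h0
    rcases Multiset.mem_add.1 ha with h | h
    · exact h1 _ h
    · exact h1' _ h
  · intro a ha
    rcases Multiset.mem_add.1 ha with h | h
    · exact h2 _ h
    · exact h2' _ h

theorem Pv.impL {x : ℕ} {A B : Formula} (h0 : (x, A.imp B) ∈ L) (h : Pv H R L {(x, A)})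
    (h' : Pv H R (insert (x, B) L) Δ) : Pv H R L Δ := by
  obtain ⟨n, Γ, hj, h1⟩ := h.right1
  obtain ⟨m, Γ', D', hj', h1', h2'⟩ := h'.left1
  refine ⟨max n m + 1, (x, A.imp B) ::ₘ (Γ + Γ'), 0 + D',
    Jrule (Rule.impL R Γ Γ' 0 D' x A B) (by simp) ?_, ?_, by simpa using h2'⟩
  · simp only [List.mem_cons, List.not_mem_nil, or_false, forall_eq_or_imp, forall_eq]
    exact ⟨hj.up (le_max_left _ _), hj'.up (le_max_right _ _)⟩
  · intro a ha
    rcases Multiset.mem_cons.1 ha with rfl | ha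
    · exact h0
    rcases Multiset.mem_add.1 ha with h | h
    · exact h1 _ h
    · exact h1' _ h

theorem Pv.trans {x y z : ℕ} (hxy : (x, y) ∈ R) (hyz : (y, z) ∈ R)
    (h : Pv H (insert (x, z) R) L Δ) : Pv H R L Δ := by
  obtain ⟨n, Γ, D, hj, h1, h2⟩ := h
  refine ⟨n + 1, Γ, D, J.rule (Rule.trans R Γ D x y z rfl hxy hyz) ?_ (by simpa using hj), h1, h2⟩
  simp only [List.mem_singleton, forall_eq]
  rintro a b (hab | hab) hb
  · exfalso; apply hb; left; left
    simp only [Prod.mk.injEq] at hab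
    rw [hab.2]; exact ⟨y, Or.inr hyz⟩
  · exfalso; apply hb; left; left; exact ⟨a, Or.inr hab⟩

def addChild (R : Set (ℕ × ℕ)) (x y : ℕ) : Set (ℕ × ℕ) :=
  R ∪ {q | q.2 = y ∧ (q.1 = x ∨ (q.1, x) ∈ R)}

theorem Pv.addChild_insert (hR : R.Finite) {x y : ℕ} (h : Pv H (addChild R x y) L Δ) :
    Pv H (insert (x, y) R) L Δ := by
  have key : ∀ s : Set (ℕ × ℕ), s.Finite → ∀ R' : Set (ℕ × ℕ), insert (x, y) R ⊆ R' →
      (∀ q ∈ s, q.2 = y ∧ (q.1, x) ∈ R) → Pv H (R' ∪ s) L Δ → Pv H R' L Δ := by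
    intro s hs
    induction s, hs using Set.Finite.induction_on with
    | empty => intro R' _ _ h; simpa using h
    | insert _ _ ih =>
      rename_i q s _ _
      intro R' hR' hq hh
      obtain ⟨a, b⟩ := q
      obtain ⟨rfl, ha⟩ := hq (a, b) (by simp)
      refine Pv.trans (x := a) (y := x) (z := b) (hR' (by right; exact ha)) (hR' (by simp)) ?_
      refine ih _ (hR'.trans (Set.subset_insert _ _)) (fun q h => hq q (by simp [h])) ?_
      convert hh using 1
      ext q; simp only [Set.mem_union, Set.mem_insert_iff]; tauto
  refine key {q | q.2 = y ∧ (q.1, x) ∈ R} ?_ _ subset_rfl (fun q h => h) ?_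
  · apply (hR.image (fun q => (q.1, y))).subset
    rintro ⟨a, b⟩ ⟨hb, h⟩
    exact ⟨_, h, by simpa using hb.symm⟩
  · convert h using 1
    ext ⟨a, b⟩; simp only [addChild, Set.mem_union, Set.mem_insert_iff, Set.mem_ofPred_eq, Prod.mk.injEq]
    tauto

def FreshFor (y : ℕ) (H : List Entry) (R : Set (ℕ × ℕ)) (L Δ : Set LFormula) : Prop :=
  y ∉ topD H ∧ y ∉ relVars R ∧ (∀ A, (y, A) ∉ L) ∧ ∀ A, (y, A) ∉ Δ

theorem Pv.diaL (hR : R.Finite) {x y : ℕ} {A : Formula} (h0 : (x, A.dia) ∈ L)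
    (hy : FreshFor y H R L Δ)
    (h : Pv H (addChild R x y) (insert (y, A) L) Δ) : Pv H R L Δ := by
  obtain ⟨n, Γ, D, hj, h1, h2⟩ := (Pv.addChild_insert hR h).left1
  obtain ⟨f1, f2, f3, f4⟩ := hy
  have hfr : Fresh y ⟨R, (x, A.dia) ::ₘ Γ, D⟩ := by
    rintro ((h | ⟨B, h⟩) | ⟨B, h⟩)
    · exact f2 h
    · rcases Multiset.mem_cons.1 h with h | h
      · rw [← h] at h0; exact f3 _ h0
      · exact f3 _ (h1 _ h)
    · exact f4 _ (h2 _ h)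
  refine ⟨n + 1, (x, A.dia) ::ₘ Γ, D, J.rule (Rule.diaL R Γ D x y A hfr) ?_ (by simpa using hj),
    ?_, h2⟩
  · simp only [List.mem_singleton, forall_eq]
    rintro a b (hab | hab) hb
    · simp only [Prod.mk.injEq] at hab
      rw [hab.2]; exact f1
    · exfalso; apply hb; left; left; exact ⟨a, Or.inr hab⟩
  · intro a ha
    rcases Multiset.mem_cons.1 ha with rfl | h3
    · exact h0
    · exact h1 _ h3

theorem Pv.boxR (hR : R.Finite) {x y : ℕ} {A : Formula}
    (hy : FreshFor y H R L ∅) (hxy : y ≠ x)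
    (h : Pv H (addChild R x y) L {(y, A)}) : Pv H R L {(x, A.box)} := by
  obtain ⟨n, Γ, hj, h1⟩ := (Pv.addChild_insert hR h).right1
  obtain ⟨f1, f2, f3, f4⟩ := hy
  have hfr : Fresh y ⟨R, Γ, (x, A.box) ::ₘ 0⟩ := by
    rintro ((h | ⟨B, h⟩) | ⟨B, h⟩)
    · exact f2 h
    · exact f3 _ (h1 _ h)
    · simp at h; exact hxy h.1
  refine ⟨n + 1, Γ, (x, A.box) ::ₘ 0, J.rule (Rule.boxR R Γ 0 x y A (fun _ => rfl) hfr) ?_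
    (by simpa using hj), h1, by simp⟩
  · simp only [List.mem_singleton, forall_eq]
    rintro a b (hab | hab) hb
    · simp only [Prod.mk.injEq] at hab
      rw [hab.2]; exact f1
    · exfalso; apply hb; left; left; exact ⟨a, Or.inr hab⟩

theorem Pv.push (D : List ℕ) {Γ E : Multiset LFormula} (hD : topD H <+: D)
    (h1 : ∀ a, a ∈ Γ ↔ a ∈ L) (h2 : ∀ a, a ∈ E ↔ a ∈ Δ)
    (h : Pv (⟨⟨R, Γ, E⟩, D⟩ :: H) R L Δ) : Pv H R L Δ := by
  obtain ⟨n, Γ', E', hj, h3, h4⟩ := h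
  refine ⟨n + 1 + 1, Γ, E, J.push D hD (hj.super ?_ ?_), fun a h => (h1 a).1 h, fun a h => (h2 a).1 h⟩
  · exact fun b hb => (h1 b).2 (h3 b hb)
  · exact fun b hb => (h2 b).2 (h4 b hb)

theorem Pv.jump {e : Entry} {h' : List Entry} (hs : (e :: h') <:+ H) (f : ℕ → ℕ) (p : ℕ)
    (hp : p < e.D.length) (hfix : ∀ x ∈ e.D.take p, f x = x) (hm : (e.D[p], f e.D[p]) ∈ R)
    (hR : ∀ x y, (x, y) ∈ e.S.rel → (f x, f y) ∈ R)
    (hL : ∀ x A, (x, A) ∈ e.S.left → (f x, A) ∈ L)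
    (hΔ : ∀ x A, (x, A) ∈ e.S.right → (f x, A) ∈ Δ) : Pv H R L Δ := by
  refine ⟨0, e.S.left.map (lab f), e.S.right.map (lab f), J.jump e f p hp hs ⟨hR, ?_, ?_⟩ hfix hm,
    ?_, ?_⟩
  · intro x A hx; exact Multiset.mem_map.2 ⟨_, hx, rfl⟩
  · intro x A hx; exact Multiset.mem_map.2 ⟨_, hx, rfl⟩
  · intro a ha
    obtain ⟨⟨x, A⟩, hx, rfl⟩ := Multiset.mem_map.1 ha
    exact hL x A hx
  · intro a ha
    obtain ⟨⟨x, A⟩, hx, rfl⟩ := Multiset.mem_map.1 ha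
    exact hΔ x A hx

end rules

theorem relVars_finite {R : Set (ℕ × ℕ)} (h : R.Finite) : (relVars R).Finite :=
  (vars_finite ⟨R, 0, 0⟩ h).subset (fun _ hx => Or.inl (Or.inl hx))

theorem Pv.ident (A : Formula) : ∀ (H : List Entry) (R : Set (ℕ × ℕ)) (_ : R.Finite) (x : ℕ),
    Pv H R {(x, A)} {(x, A)} := by
  have frx : ∀ (H : List Entry) (R : Set (ℕ × ℕ)) (_ : R.Finite) (x : ℕ),
      ∃ y, y ∉ topD H ∧ y ∉ relVars R ∧ y ≠ x := by
    intro H R hR x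
    obtain ⟨y, hy⟩ := (((topD H).toFinset.finite_toSet.union (relVars_finite hR)).union
      (Set.finite_singleton x)).exists_notMem
    simp only [Set.mem_union, not_or, Set.mem_singleton_iff, Finset.mem_coe, List.mem_toFinset] at hy
    exact ⟨y, hy.1.1, hy.1.2, hy.2⟩
  have fin : ∀ (R : Set (ℕ × ℕ)) (_ : R.Finite) (x y : ℕ), (addChild R x y).Finite := by
    intro R hR x y
    apply (hR.union ((hR.image (fun q => (q.1, y))).insert (x, y))).subset
    rintro ⟨a, b⟩ (h | ⟨rfl, rfl | h⟩)
    · exact Or.inl h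
    · right; left; rfl
    · right; right; exact ⟨_, h, rfl⟩
  induction A with
  | atom p =>
    intro H R hR x
    exact ⟨1, _, _, Jrule (n := 0) (Rule.id R x p) (by simp) (by simp), by simp, by simp⟩
  | bot => intro H R hR x; exact Pv.botL (x := x) (by simp)
  | and A B iA iB =>
    intro H R hR x
    refine Pv.andR (Pv.andL₁ (x := x) (A := A) (B := B) (by simp) ?_)
      (Pv.andL₂ (x := x) (A := A) (B := B) (by simp) ?_)
    · exact (iA H R hR x).mono List.suffix_rfl subset_rfl (by simp) subset_rfl
    · exact (iB H R hR x).mono List.suffix_rfl subset_rfl (by simp) subset_rfl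
  | or A B iA iB =>
    intro H R hR x
    refine Pv.orL (x := x) (A := A) (B := B) (by simp) (Pv.orR₁ ?_) (Pv.orR₂ ?_)
    · exact (iA H R hR x).mono List.suffix_rfl subset_rfl (by simp) subset_rfl
    · exact (iB H R hR x).mono List.suffix_rfl subset_rfl (by simp) subset_rfl
  | imp A B iA iB =>
    intro H R hR x
    refine Pv.impR (Pv.impL (x := x) (A := A) (B := B) (by simp) ?_ ?_)
    · exact (iA H R hR x).mono List.suffix_rfl subset_rfl (by simp) subset_rfl
    · exact (iB H R hR x).mono List.suffix_rfl subset_rfl (by simp) subset_rfl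
  | box A iA =>
    intro H R hR x
    obtain ⟨y, h1, h2, h3⟩ := frx H R hR x
    refine Pv.boxR hR (y := y) ⟨h1, h2, by simp [h3], by simp⟩ h3 ?_
    refine Pv.boxL (x := x) (y := y) (A := A) (by simp) (by right; simp) ?_
    exact (iA H _ (fin R hR x y) y).mono List.suffix_rfl subset_rfl (by simp) subset_rfl
  | dia A iA =>
    intro H R hR x
    obtain ⟨y, h1, h2, h3⟩ := frx H R hR x
    refine Pv.diaL hR (x := x) (y := y) (A := A) (by simp) ⟨h1, h2, by simp [h3], by simp [h3]⟩ ?_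
    refine Pv.diaR (x := x) (y := y) (by right; simp) ?_
    exact (iA H _ (fin R hR x y) y).mono List.suffix_rfl subset_rfl (by simp) subset_rfl

theorem Pv.of_mem {H : List Entry} {R : Set (ℕ × ℕ)} (hR : R.Finite) {L Δ : Set LFormula}
    {a : LFormula} (h : a ∈ L) (h' : a ∈ Δ) : Pv H R L Δ :=
  (Pv.ident a.2 H R hR a.1).mono List.suffix_rfl subset_rfl (by simpa using h) (by simpa using h')



structure Tr : Type where
  V : Finset ℕ
  R : Set (ℕ × ℕ)
  L : Set LFormula

def Tr.le (T T' : Tr) : Prop := T.V ⊆ T'.V ∧ T.R ⊆ T'.R ∧ T.L ⊆ T'.L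

theorem Tr.le.rfl {T : Tr} : T.le T := ⟨subset_rfl, subset_rfl, subset_rfl⟩
theorem Tr.le.trans {T T' T'' : Tr} (h : T.le T') (h' : T'.le T'') : T.le T'' :=
  ⟨h.1.trans h'.1, h.2.1.trans h'.2.1, h.2.2.trans h'.2.2⟩

structure Wf (F : Finset Formula) (T : Tr) : Prop where
  rv : ∀ a b, (a, b) ∈ T.R → a ∈ T.V ∧ b ∈ T.V
  lt : ∀ a b, (a, b) ∈ T.R → a < b
  tr : ∀ a b c, (a, b) ∈ T.R → (b, c) ∈ T.R → (a, c) ∈ T.R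
  fo : ∀ a b c, (a, c) ∈ T.R → (b, c) ∈ T.R → a = b ∨ (a, b) ∈ T.R ∨ (b, a) ∈ T.R
  lv : ∀ x A, (x, A) ∈ T.L → x ∈ T.V ∧ A ∈ F

theorem Wf.finR {F : Finset Formula} {T : Tr} (h : Wf F T) : T.R.Finite := by
  apply ((T.V.finite_toSet).prod (T.V.finite_toSet)).subset
  rintro ⟨a, b⟩ hab
  exact h.rv a b hab

theorem Wf.finL {F : Finset Formula} {T : Tr} (h : Wf F T) : T.L.Finite := by
  apply ((T.V.finite_toSet).prod (F.finite_toSet)).subset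
  rintro ⟨a, b⟩ hab
  exact h.lv a b hab

structure SubCl (F : Finset Formula) : Prop where
  and : ∀ A B, Formula.and A B ∈ F → A ∈ F ∧ B ∈ F
  or : ∀ A B, Formula.or A B ∈ F → A ∈ F ∧ B ∈ F
  imp : ∀ A B, Formula.imp A B ∈ F → A ∈ F ∧ B ∈ F
  box : ∀ A, Formula.box A ∈ F → A ∈ F
  dia : ∀ A, Formula.dia A ∈ F → A ∈ F

inductive Step (F : Finset Formula) (H : List Entry) : Tr → Tr → Prop
  | add (T : Tr) (x : ℕ) (A : Formula) : x ∈ T.V → A ∈ F → (x, A) ∉ T.L →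
      Pv H T.R T.L {(x, A)} → Step F H T ⟨T.V, T.R, insert (x, A) T.L⟩
  | or (T : Tr) (x : ℕ) (A B C : Formula) : (x, Formula.or A B) ∈ T.L → (x, A) ∉ T.L →
      (x, B) ∉ T.L → (C = A ∨ C = B) → Step F H T ⟨T.V, T.R, insert (x, C) T.L⟩
  | dia (T : Tr) (x y : ℕ) (B : Formula) : (x, Formula.dia B) ∈ T.L →
      (∀ z, (x, z) ∈ T.R → (z, B) ∉ T.L) → (∀ v ∈ T.V, v < y) →
      Step F H T ⟨insert y T.V, addChild T.R x y, insert (y, B) T.L⟩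

theorem Step.le {F : Finset Formula} {H : List Entry} {T T' : Tr} (h : Step F H T T') : T.le T' := by
  cases h with
  | add => exact ⟨subset_rfl, subset_rfl, Set.subset_insert _ _⟩
  | or => exact ⟨subset_rfl, subset_rfl, Set.subset_insert _ _⟩
  | dia => exact ⟨Finset.subset_insert _ _, fun _ h => Or.inl h, Set.subset_insert _ _⟩

structure Satd (F : Finset Formula) (H : List Entry) (T : Tr) : Prop where
  closed : ∀ x A, x ∈ T.V → A ∈ F → Pv H T.R T.L {(x, A)} → (x, A) ∈ T.L
  prime : ∀ x A B, (x, Formula.or A B) ∈ T.L → (x, A) ∈ T.L ∨ (x, B) ∈ T.L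
  wit : ∀ x B, (x, Formula.dia B) ∈ T.L → ∃ y, (x, y) ∈ T.R ∧ (y, B) ∈ T.L

theorem wf_child {F : Finset Formula} {T : Tr} (h : Wf F T) {x y : ℕ} (hx : x ∈ T.V)
    (hy : ∀ v ∈ T.V, v < y) {L' : Set LFormula}
    (hL : ∀ z A, (z, A) ∈ L' → (z, A) ∈ T.L ∨ (z = y ∧ A ∈ F)) :
    Wf F ⟨insert y T.V, addChild T.R x y, L'⟩ := by
  have hyV : y ∉ T.V := fun h => lt_irrefl _ (hy y h)
  have hxy : x ≠ y := fun e => hyV (e ▸ hx)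
  constructor
  · rintro a b (hab | ⟨hb, hab⟩)
    · have := h.rv a b hab
      simp [this]
    · simp only at hb hab
      subst hb
      refine ⟨?_, by simp⟩
      rcases hab with rfl | hab
      · simp [hx]
      · simp [(h.rv _ _ hab).1]
  · rintro a b (hab | ⟨hb, hab⟩)
    · exact h.lt a b hab
    · simp only at hb hab
      subst hb
      rcases hab with rfl | hab
      · exact hy _ hx
      · exact hy _ (h.rv _ _ hab).1
  · rintro a b c hab (hbc | ⟨hc, hbc⟩)
    · left
      rcases hab with hab | ⟨hb, _⟩
      · exact h.tr _ _ _ hab hbc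
      · simp only at hb
        exact absurd (hb ▸ (h.rv _ _ hbc).1) hyV
    · right
      simp only at hc hbc
      refine ⟨hc, Or.inr ?_⟩
      have hbV : b ∈ T.V := by
        rcases hbc with rfl | hbc
        · exact hx
        · exact (h.rv _ _ hbc).1
      rcases hab with hab | ⟨hb, _⟩
      · rcases hbc with rfl | hbc
        · exact hab
        · exact h.tr _ _ _ hab hbc
      · simp only at hb
        exact absurd (hb ▸ hbV) hyV
  · have key : ∀ a b, (a = x ∨ (a, x) ∈ T.R) → (b = x ∨ (b, x) ∈ T.R) →
        a = b ∨ (a, b) ∈ T.R ∨ (b, a) ∈ T.R := by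
      rintro a b (rfl | ha) (rfl | hb)
      · exact Or.inl rfl
      · exact Or.inr (Or.inr hb)
      · exact Or.inr (Or.inl ha)
      · exact h.fo _ _ _ ha hb
    rintro a b c (hac | ⟨hc, hac⟩) (hbc | ⟨hc', hbc⟩)
    · exact (h.fo a b c hac hbc).imp_right (Or.imp Or.inl Or.inl)
    · exact absurd (by simp only at hc'; exact hc' ▸ (h.rv _ _ hac).2) hyV
    · exact absurd (by simp only at hc; exact hc ▸ (h.rv _ _ hbc).2) hyV
    · exact (key a b hac hbc).imp_right (Or.imp Or.inl Or.inl)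
  · intro z A hz
    rcases hL z A hz with h1 | ⟨rfl, h1⟩
    · have := h.lv z A h1
      simp [this]
    · simp [h1]

theorem wf_addL {F : Finset Formula} {T : Tr} (h : Wf F T) {x : ℕ} {A : Formula} (hx : x ∈ T.V)
    (hA : A ∈ F) : Wf F ⟨T.V, T.R, insert (x, A) T.L⟩ := by
  refine ⟨h.rv, h.lt, h.tr, h.fo, ?_⟩
  rintro z B (hz | hz)
  · simp only [Prod.mk.injEq] at hz
    rw [hz.1, hz.2]; exact ⟨hx, hA⟩
  · exact h.lv z B hz

theorem Step.wf {F : Finset Formula} {H : List Entry} {T T' : Tr} (hF : SubCl F)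
    (h : Step F H T T') (hw : Wf F T) : Wf F T' := by
  cases h with
  | add x A hx hA _ _ => exact wf_addL hw hx hA
  | or x A B C h0 _ _ hC =>
    have := hw.lv _ _ h0
    have h2 := hF.or _ _ this.2
    refine wf_addL hw this.1 ?_
    rcases hC with rfl | rfl
    · exact h2.1
    · exact h2.2
  | dia x y B h0 _ hy =>
    have := hw.lv _ _ h0
    refine wf_child hw this.1 hy ?_
    rintro z A (hz | hz)
    · simp only [Prod.mk.injEq] at hz
      right; rw [hz.1, hz.2]; exact ⟨rfl, hF.dia _ this.2⟩
    · exact Or.inl hz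

section measure
open Classical in
noncomputable def Lc (F : Finset Formula) (T : Tr) (x : ℕ) : ℕ :=
  (F.filter (fun A => (x, A) ∈ T.L)).card
open Classical in
noncomputable def Wc (F : Finset Formula) (T : Tr) (x : ℕ) : ℕ :=
  (F.filter (fun A => ∃ y, (x, y) ∈ T.R ∧ (y, A) ∈ T.L)).card

noncomputable def tm (F : Finset Formula) (T : Tr) (K : ℕ → Finset Formula) (x : ℕ) : ℕ :=
  (2 * F.card + 1) ^ (F.card - (K x).card) * (2 * F.card + 1 - Lc F T x - Wc F T x)

noncomputable def mu (F : Finset Formula) (T : Tr) (K : ℕ → Finset Formula) : ℕ :=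
  ∑ x ∈ T.V, tm F T K x

variable {F : Finset Formula}

theorem Lc_le (T : Tr) (x : ℕ) : Lc F T x ≤ F.card := by
  classical exact Finset.card_filter_le _ _
theorem Wc_le (T : Tr) (x : ℕ) : Wc F T x ≤ F.card := by
  classical exact Finset.card_filter_le _ _

theorem Lc_mono {T T' : Tr} (h : T.le T') (x : ℕ) : Lc F T x ≤ Lc F T' x := by
  classical
  apply Finset.card_le_card
  intro A hA
  rw [Finset.mem_filter] at hA ⊢
  exact ⟨hA.1, h.2.2 hA.2⟩

theorem Wc_mono {T T' : Tr} (h : T.le T') (x : ℕ) : Wc F T x ≤ Wc F T' x := by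
  classical
  apply Finset.card_le_card
  intro A hA
  rw [Finset.mem_filter] at hA ⊢
  obtain ⟨h1, y, h2, h3⟩ := hA
  exact ⟨h1, y, h.2.1 h2, h.2.2 h3⟩

theorem Lc_lt {T T' : Tr} (h : T.le T') {x : ℕ} {A : Formula} (hA : A ∈ F) (h1 : (x, A) ∉ T.L)
    (h2 : (x, A) ∈ T'.L) : Lc F T x < Lc F T' x := by
  classical
  apply Finset.card_lt_card
  refine ⟨?_, ?_⟩
  · intro A hA
    rw [Finset.mem_filter] at hA ⊢
    exact ⟨hA.1, h.2.2 hA.2⟩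
  · intro hh
    exact h1 (Finset.mem_filter.1 (hh (Finset.mem_filter.2 ⟨hA, h2⟩))).2

theorem Wc_lt {T T' : Tr} (h : T.le T') {x y : ℕ} {A : Formula} (hA : A ∈ F)
    (h1 : ∀ z, (x, z) ∈ T.R → (z, A) ∉ T.L)
    (h2 : (y, A) ∈ T'.L) (h3 : (x, y) ∈ T'.R) : Wc F T x < Wc F T' x := by
  classical
  apply Finset.card_lt_card
  refine ⟨?_, ?_⟩
  · intro A hA
    rw [Finset.mem_filter] at hA ⊢
    obtain ⟨h1, y, h2, h3⟩ := hA
    exact ⟨h1, y, h.2.1 h2, h.2.2 h3⟩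
  · intro hh
    obtain ⟨_, z, h4, h5⟩ := (Finset.mem_filter.1 (hh (Finset.mem_filter.2 ⟨hA, y, h3, h2⟩)))
    exact h1 z h4 h5

theorem tm_mono {T T' : Tr} (h : T.le T') (K : ℕ → Finset Formula) (x : ℕ) :
    tm F T' K x ≤ tm F T K x := by
  apply Nat.mul_le_mul_left
  have := Lc_mono (F := F) h x
  have := Wc_mono (F := F) h x
  omega

theorem tm_lt {T T' : Tr} (h : T.le T') (K : ℕ → Finset Formula) (x : ℕ)
    (hlt : Lc F T x < Lc F T' x ∨ Wc F T x < Wc F T' x) :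
    tm F T' K x + (2 * F.card + 1) ^ (F.card - (K x).card) ≤ tm F T K x := by
  have h1 := Lc_mono (F := F) h x
  have h2 := Wc_mono (F := F) h x
  have h3 := Lc_le (F := F) T' x
  have h4 := Wc_le (F := F) T' x
  unfold tm
  rw [← Nat.mul_succ]
  apply Nat.mul_le_mul_left
  omega

theorem mu_add {T : Tr} {x : ℕ} {A : Formula} (hx : x ∈ T.V) (hA : A ∈ F) (h1 : (x, A) ∉ T.L)
    (K : ℕ → Finset Formula) : mu F ⟨T.V, T.R, insert (x, A) T.L⟩ K < mu F T K := by
  have hle : T.le ⟨T.V, T.R, insert (x, A) T.L⟩ := ⟨subset_rfl, subset_rfl, Set.subset_insert _ _⟩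
  apply Finset.sum_lt_sum
  · intro i _; exact tm_mono hle K i
  · refine ⟨x, hx, ?_⟩
    have := tm_lt hle K x (Or.inl (Lc_lt hle hA h1 (Set.mem_insert _ _)))
    have hpos : 0 < (2 * F.card + 1) ^ (F.card - (K x).card) := by positivity
    omega

open Classical in
theorem mu_dia {T : Tr} {x y : ℕ} {B : Formula} (hx : x ∈ T.V) (hB : B ∈ F)
    (h1 : ∀ z, (x, z) ∈ T.R → (z, B) ∉ T.L) (hy : y ∉ T.V)
    (K : ℕ → Finset Formula) (hK : K x ⊆ F) (hBK : B ∉ K x) :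
    mu F ⟨insert y T.V, addChild T.R x y, insert (y, B) T.L⟩
      (Function.update K y (insert B (K x))) < mu F T K := by
  set T' : Tr := ⟨insert y T.V, addChild T.R x y, insert (y, B) T.L⟩ with hT'
  set K' := Function.update K y (insert B (K x)) with hK'
  have hle : T.le T' := ⟨Finset.subset_insert _ _, fun _ h => Or.inl h, Set.subset_insert _ _⟩
  have e1 : mu F T' K' = tm F T' K' y + ∑ z ∈ T.V, tm F T' K z := by
    show ∑ z ∈ insert y T.V, _ = _
    rw [Finset.sum_insert hy]
    congr 1
    apply Finset.sum_congr rfl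
    intro z hz
    have : z ≠ y := fun e => hy (e ▸ hz)
    simp [tm, hK', Function.update_of_ne this]
  have e2 : ∑ z ∈ T.V, tm F T' K z + (2 * F.card + 1) ^ (F.card - (K x).card) ≤ mu F T K := by
    unfold mu
    rw [← Finset.add_sum_erase _ _ hx, ← Finset.add_sum_erase (a := x) T.V _ hx]
    have a1 := tm_lt hle K x (Or.inr (Wc_lt (F := F) (y := y) hle hB h1 (Set.mem_insert _ _)
      (Or.inr ⟨rfl, Or.inl rfl⟩)))
    have a2 : ∑ z ∈ T.V.erase x, tm F T' K z ≤ ∑ z ∈ T.V.erase x, tm F T K z :=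
      Finset.sum_le_sum (fun i _ => tm_mono hle K i)
    omega
  have hc : (K x).card + 1 ≤ F.card := by
    rw [← Finset.card_insert_of_notMem hBK]
    exact Finset.card_le_card (Finset.insert_subset hB hK)
  have e3 : tm F T' K' y < (2 * F.card + 1) ^ (F.card - (K x).card) := by
    have hL : 0 < Lc F T' y := by
      unfold Lc
      rw [Finset.card_pos]
      exact ⟨B, by simp only [Finset.mem_filter]; exact ⟨hB, Set.mem_insert _ _⟩⟩
    have : F.card - (K x).card = (F.card - (K x).card - 1) + 1 := by omega
    rw [this, pow_succ]
    unfold tm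
    have e : F.card - (K' y).card = F.card - (K x).card - 1 := by
      have : K' y = insert B (K x) := by rw [hK']; exact Function.update_self ..
      rw [this, Finset.card_insert_of_notMem hBK]; omega
    rw [e]
    have hp : 0 < (2 * F.card + 1) ^ (F.card - (K x).card - 1) := Nat.pow_pos (Nat.succ_pos _)
    refine Nat.mul_lt_mul_of_pos_left ?_ hp
    clear_value T' K'
    omega
  omega

end measure

open Classical in
theorem saturate_aux {F : Finset Formula} (hF : SubCl F) (H : List Entry) (Δ : Set LFormula)
    (hΔ : Δ.Finite) : ∀ (N : ℕ) (T : Tr) (hist : List Entry) (K : ℕ → Finset Formula),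
    mu F T K = N → Wf F T → H <:+ hist → ¬ Pv hist T.R T.L Δ → (∀ x A, (x, A) ∈ Δ → x ∈ T.V) →
    (∀ y ∈ T.V, K y ⊆ F) →
    (∀ y ∈ T.V, ∀ C ∈ K y, ∀ T' : Tr, Wf F T' → T.le T' → ∀ y', (y, y') ∈ T'.R →
      (y', C) ∈ T'.L → Pv hist T'.R T'.L Δ) →
    ∃ T1, Relation.ReflTransGen (Step F H) T T1 ∧ Wf F T1 ∧ Satd F H T1 ∧ ¬ Pv H T1.R T1.L Δ := by
  intro N
  induction N using Nat.strong_induction_on with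
  | _ N ih =>
  intro T hist K hN hw hH hP hΔV hKF hK
  have addcase : ∀ x A, x ∈ T.V → A ∈ F → (x, A) ∉ T.L →
      Step F H T ⟨T.V, T.R, insert (x, A) T.L⟩ →
      ¬ Pv hist T.R (insert (x, A) T.L) Δ →
      ∃ T1, Relation.ReflTransGen (Step F H) T T1 ∧ Wf F T1 ∧ Satd F H T1 ∧ ¬ Pv H T1.R T1.L Δ := by
    intro x A hx hA h1 hst hn
    obtain ⟨T1, h2, h3⟩ := ih _ (hN ▸ mu_add hx hA h1 K) ⟨T.V, T.R, insert (x, A) T.L⟩ hist K rfl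
      (wf_addL hw hx hA) hH hn hΔV hKF
      (fun y hy C hC T' hw' hle => hK y hy C hC T' hw' (hst.le.trans hle))
    exact ⟨T1, Relation.ReflTransGen.head hst h2, h3⟩
  by_cases c1 : ∃ x A, x ∈ T.V ∧ A ∈ F ∧ (x, A) ∉ T.L ∧ Pv H T.R T.L {(x, A)}
  · obtain ⟨x, A, hx, hA, hxA, hp⟩ := c1
    refine addcase x A hx hA hxA (Step.add T x A hx hA hxA hp) ?_
    intro h
    exact hP ((hp.mono hH subset_rfl subset_rfl subset_rfl).cut h)
  by_cases c2 : ∃ x A B, (x, Formula.or A B) ∈ T.L ∧ (x, A) ∉ T.L ∧ (x, B) ∉ T.L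
  · obtain ⟨x, A, B, h0, hA, hB⟩ := c2
    have hx := hw.lv _ _ h0
    have hAB := hF.or _ _ hx.2
    by_cases hPA : Pv hist T.R (insert (x, A) T.L) Δ
    · refine addcase x B hx.1 hAB.2 hB (Step.or T x A B B h0 hA hB (Or.inr rfl)) ?_
      intro hPB
      exact hP (Pv.orL h0 hPA hPB)
    · exact addcase x A hx.1 hAB.1 hA (Step.or T x A B A h0 hA hB (Or.inl rfl)) hPA
  by_cases c3 : ∃ x B, (x, Formula.dia B) ∈ T.L ∧ ∀ z, (x, z) ∈ T.R → (z, B) ∉ T.L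
  · obtain ⟨x, B, h0, hz⟩ := c3
    have hx := hw.lv _ _ h0
    have hBF := hF.dia _ hx.2
    obtain ⟨y, hyV, hyD⟩ : ∃ y, (∀ v ∈ T.V, v < y) ∧ y ∉ topD hist := by
      refine ⟨(T.V.sup id + (topD hist).sum) + 1, ?_, ?_⟩
      · intro v hv
        have := Finset.le_sup (f := id) hv
        simp only [id] at this
        omega
      · intro hy
        have := List.le_sum_of_mem hy
        omega
    have hyV' : y ∉ T.V := fun h => lt_irrefl _ (hyV y h)
    set T' : Tr := ⟨insert y T.V, addChild T.R x y, insert (y, B) T.L⟩ with hT'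
    have hst : Step F H T T' := Step.dia T x y B h0 hz hyV
    have hw' := hst.wf hF hw
    have hle := hst.le
    have hfr : FreshFor y hist T.R T.L Δ := by
      refine ⟨hyD, ?_, ?_, ?_⟩
      · rintro ⟨w, h | h⟩
        · exact hyV' (hw.rv _ _ h).1
        · exact hyV' (hw.rv _ _ h).2
      · intro A hA; exact hyV' (hw.lv _ _ hA).1
      · intro A hA; exact hyV' (hΔV _ _ hA)
    have hP' : ¬ Pv hist T'.R T'.L Δ := fun h => hP (Pv.diaL hw.finR h0 hfr h)
    have hBK : B ∉ K x := by
      intro hBK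
      exact hP' (hK x hx.1 B hBK T' hw' hle y (Or.inr ⟨rfl, Or.inl rfl⟩) (Set.mem_insert _ _))
    let e : Entry := ⟨⟨T'.R, hw'.finL.toFinset.val, hΔ.toFinset.val⟩, topD hist ++ [y]⟩
    have hP'' : ¬ Pv (e :: hist) T'.R T'.L Δ := by
      intro h
      refine hP' (Pv.push (topD hist ++ [y]) (List.prefix_append _ _) ?_ ?_ h)
      · intro a; rw [Finset.mem_val, Set.Finite.mem_toFinset]
      · intro a; rw [Finset.mem_val, Set.Finite.mem_toFinset]
    obtain ⟨T1, h2, h3⟩ := ih _ (hN ▸ mu_dia hx.1 hBF hz hyV' K (hKF x hx.1) hBK) T' (e :: hist)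
      (Function.update K y (insert B (K x))) rfl hw'
      (hH.trans (List.suffix_cons _ _)) hP'' (fun a A h => hle.1 (hΔV a A h)) (by
        intro v hv
        by_cases hvy : v = y
        · subst hvy
          simp only [Function.update_self]
          exact Finset.insert_subset hBF (hKF x hx.1)
        · rw [Function.update_of_ne hvy]
          apply hKF
          simpa [hT', hvy] using hv) (by
        intro v hv C hC T'' hw'' hle' y' hy' hC'
        have hmono : ∀ {P}, Pv hist P T''.L Δ → Pv (e :: hist) P T''.L Δ := fun h =>
          h.mono (List.suffix_cons _ _) subset_rfl subset_rfl subset_rfl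
        by_cases hvy : v = y
        · subst hvy
          simp only [Function.update_self, Finset.mem_insert] at hC
          have hxv : (x, v) ∈ T''.R := hle'.2.1 (Or.inr ⟨rfl, Or.inl rfl⟩)
          rcases hC with rfl | hC
          · have hvx : x ≠ v := fun h => hyV' (h ▸ hx.1)
            refine Pv.jump (e := e) (h' := hist) List.suffix_rfl (Function.update id v y')
              (topD hist).length (by simp [e]) ?_ ?_ ?_ ?_ ?_
            · intro z hz
              have : z ∈ topD hist := by simpa [e] using hz
              rw [Function.update_of_ne]
              · rfl
              · rintro rfl; exact hyD this
            · simpa [e] using hy'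
            · rintro a b hab
              rcases hab with hab | ⟨hb, hab⟩
              · have ha : a ≠ v := fun h => hyV' (h ▸ (hw.rv _ _ hab).1)
                have hb : b ≠ v := fun h => hyV' (h ▸ (hw.rv _ _ hab).2)
                rw [Function.update_of_ne ha, Function.update_of_ne hb]
                exact hle'.2.1 (Or.inl hab)
              · have hab' : (a, v) ∈ T''.R := hle'.2.1 (Or.inr ⟨rfl, hab⟩)
                have ha : a ≠ v := (hw''.lt _ _ hab').ne
                simp only at hb
                subst hb
                rw [Function.update_of_ne ha, Function.update_self]
                exact hw''.tr _ _ _ hab' hy'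
            · intro a A ha
              have ha : (a, A) ∈ T'.L := by
                have := ha
                dsimp only [e] at this
                rwa [Finset.mem_val, Set.Finite.mem_toFinset] at this
              rcases ha with ha | ha
              · simp only [Prod.mk.injEq] at ha
                rw [ha.1, ha.2, Function.update_self]; exact hC'
              · have hav : a ≠ v := fun h => hyV' (h ▸ (hw.lv _ _ ha).1)
                rw [Function.update_of_ne hav]
                exact hle'.2.2 (Or.inr ha)
            · intro a A ha
              have ha : (a, A) ∈ Δ := by simpa [e] using ha
              have hav : a ≠ v := fun h => hyV' (h ▸ hΔV _ _ ha)
              rw [Function.update_of_ne hav]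
              exact ha
          · exact hmono (hK x hx.1 C hC T'' hw'' (hle.trans hle') y' (hw''.tr _ _ _ hxv hy') hC')
        · rw [Function.update_of_ne hvy] at hC
          have hvV : v ∈ T.V := by simpa [hT', hvy] using hv
          exact hmono (hK v hvV C hC T'' hw'' (hle.trans hle') y' hy' hC'))
    exact ⟨T1, Relation.ReflTransGen.head hst h2, h3⟩
  push Not at c1 c2 c3
  refine ⟨T, Relation.ReflTransGen.refl, hw, ⟨?_, ?_, ?_⟩, ?_⟩
  · intro x A hx hA hp
    by_contra h
    exact c1 x A hx hA h hp
  · intro x A B h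
    by_contra hh
    push Not at hh
    exact hh.2 (c2 x A B h hh.1)
  · exact c3
  · exact fun h => hP (h.mono hH subset_rfl subset_rfl subset_rfl)

theorem saturate {F : Finset Formula} (hF : SubCl F) (H : List Entry) (Δ : Set LFormula)
    (hΔ : Δ.Finite) (T : Tr) (hw : Wf F T) (hP : ¬ Pv H T.R T.L Δ)
    (hΔV : ∀ x A, (x, A) ∈ Δ → x ∈ T.V) :
    ∃ T1, Relation.ReflTransGen (Step F H) T T1 ∧ Wf F T1 ∧ Satd F H T1 ∧ ¬ Pv H T1.R T1.L Δ :=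
  saturate_aux hF H Δ hΔ _ T H (fun _ => ∅) rfl hw List.suffix_rfl hP hΔV (by simp) (by simp)



structure Ob (C : Type) : Type where
  V : Finset ℕ
  R : Set (ℕ × ℕ)
  col : ℕ → C
  x : ℕ

structure Ob.Good {C : Type} (o : Ob C) : Prop where
  rv : ∀ a b, (a, b) ∈ o.R → a ∈ o.V ∧ b ∈ o.V
  lt : ∀ a b, (a, b) ∈ o.R → a < b
  tr : ∀ a b c, (a, b) ∈ o.R → (b, c) ∈ o.R → (a, c) ∈ o.R
  fo : ∀ a b c, (a, c) ∈ o.R → (b, c) ∈ o.R → a = b ∨ (a, b) ∈ o.R ∨ (b, a) ∈ o.R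
  xv : o.x ∈ o.V

def Ob.sub {C : Type} (o : Ob C) (a : ℕ) : Prop := a = o.x ∨ (o.x, a) ∈ o.R

def Ob.at {C : Type} (o : Ob C) (y : ℕ) : Ob C := ⟨o.V, o.R, o.col, y⟩

def Emb {C : Type} (o o' : Ob C) : Prop :=
  ∃ f : ℕ → ℕ, (∀ a b, o.sub a → o.sub b → (a, b) ∈ o.R → (f a, f b) ∈ o'.R) ∧
    (∀ a, o.sub a → o'.sub (f a) ∧ o'.col (f a) = o.col a)

theorem Emb.rfl {C : Type} (o : Ob C) : Emb o o := ⟨id, fun _ _ _ _ h => h, fun _ h => ⟨h, _root_.rfl⟩⟩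

theorem Emb.trans {C : Type} {o o' o'' : Ob C} (h : Emb o o') (h' : Emb o' o'') : Emb o o'' := by
  obtain ⟨f, h1, h2⟩ := h
  obtain ⟨g, h3, h4⟩ := h'
  refine ⟨g ∘ f, fun a b ha hb hab => h3 _ _ (h2 a ha).1 (h2 b hb).1 (h1 a b ha hb hab), fun a ha => ?_⟩
  exact ⟨(h4 _ (h2 a ha).1).1, (h4 _ (h2 a ha).1).2.trans (h2 a ha).2⟩

instance (C : Type) : IsPreorder (Ob C) Emb where
  refl := Emb.rfl
  trans := fun _ _ _ => Emb.trans

theorem Emb.lift {C : Type} {o o' : Ob C} {y : ℕ} (hg : o'.Good) (hy : (o'.x, y) ∈ o'.R)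
    (h : Emb o (o'.at y)) : Emb o o' := by
  obtain ⟨f, h1, h2⟩ := h
  refine ⟨f, h1, fun a ha => ⟨?_, (h2 a ha).2⟩⟩
  rcases (h2 a ha).1 with h | h
  · right; rw [h]; exact hy
  · right; exact hg.tr _ _ _ hy h

theorem emb_assemble {C : Type} {o o' : Ob C} (hg : o.Good) (hg' : o'.Good)
    (hc : o'.col o'.x = o.col o.x)
    (h : ∀ y, (o.x, y) ∈ o.R → ∃ y', (o'.x, y') ∈ o'.R ∧ Emb (o.at y) (o'.at y')) : Emb o o' := by
  classical
  have hex : ∀ a, (o.x, a) ∈ o.R → ∃ c, (o.x, c) ∈ o.R ∧ (a = c ∨ (c, a) ∈ o.R) :=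
    fun a ha => ⟨a, ha, Or.inl rfl⟩
  let c : ℕ → ℕ := fun a => if ha : (o.x, a) ∈ o.R then Nat.find (hex a ha) else 0
  have c1 : ∀ a, (o.x, a) ∈ o.R → (o.x, c a) ∈ o.R ∧ (a = c a ∨ (c a, a) ∈ o.R) := by
    intro a ha
    simp only [c, dif_pos ha]
    exact Nat.find_spec (hex a ha)
  have c2 : ∀ a d, (o.x, a) ∈ o.R → (o.x, d) ∈ o.R → (a = d ∨ (d, a) ∈ o.R) → c a ≤ d := by
    intro a d ha hd h
    simp only [c, dif_pos ha]
    exact Nat.find_min' (hex a ha) ⟨hd, h⟩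
  have c3 : ∀ a b, (o.x, a) ∈ o.R → (o.x, b) ∈ o.R → (a, b) ∈ o.R → c a = c b := by
    intro a b ha hb hab
    obtain ⟨a1, a2⟩ := c1 a ha
    obtain ⟨b1, b2⟩ := c1 b hb
    have hcab : (c a, b) ∈ o.R := by
      rcases a2 with e | h
      · rw [← e]; exact hab
      · exact hg.tr _ _ _ h hab
    have l1 : c b ≤ c a := c2 b (c a) hb a1 (Or.inr hcab)
    apply le_antisymm _ l1
    apply c2 a (c b) ha b1
    rcases b2 with e | h
    · have := hg.lt _ _ hcab
      omega
    · rcases hg.fo _ _ _ hab h with e | h' | h'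
      · exact Or.inl e
      · exfalso
        have h3 := hg.lt _ _ h'
        have : c a ≤ a := c2 a a ha ha (Or.inl rfl)
        omega
      · exact Or.inr h'
  choose! y' hy' hE using h
  have hE' : ∀ y, ∃ f : ℕ → ℕ, (o.x, y) ∈ o.R →
      (∀ a b, (o.at y).sub a → (o.at y).sub b → (a, b) ∈ o.R → (f a, f b) ∈ o'.R) ∧
    (∀ a, (o.at y).sub a → (o'.at (y' y)).sub (f a) ∧ o'.col (f a) = o.col a) := by
    intro y
    by_cases hy : (o.x, y) ∈ o.R
    · obtain ⟨f, hf⟩ := hE y hy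
      exact ⟨f, fun _ => hf⟩
    · exact ⟨id, fun h => absurd h hy⟩
  choose F hF using hE'
  have nx : ∀ a, (o.x, a) ∈ o.R → a ≠ o.x := fun a h e => by
    have := hg.lt _ _ h
    omega
  have subF : ∀ a, (o.x, a) ∈ o.R → (o'.x, F (c a) a) ∈ o'.R ∧ o'.col (F (c a) a) = o.col a := by
    intro a ha
    obtain ⟨a1, a2⟩ := c1 a ha
    obtain ⟨h1, h2⟩ := (hF (c a) a1).2 a a2
    refine ⟨?_, h2⟩
    rcases h1 with e | h
    · rw [e]; exact hy' _ a1
    · exact hg'.tr _ _ _ (hy' _ a1) h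
  refine ⟨fun a => if a = o.x then o'.x else F (c a) a, ?_, ?_⟩
  · rintro a b ha hb hab
    have hb' : (o.x, b) ∈ o.R := by
      rcases ha with rfl | ha
      · exact hab
      · exact hg.tr _ _ _ ha hab
    simp only [if_neg (nx b hb')]
    rcases ha with rfl | ha
    · simp only [if_true]
      exact (subF b hb').1
    · simp only [if_neg (nx a ha)]
      have e := c3 a b ha hb' hab
      rw [e]
      obtain ⟨b1, b2⟩ := c1 b hb'
      exact (hF (c b) b1).1 a b (e ▸ (c1 a ha).2) b2 hab
  · rintro a (rfl | ha)
    · simp only [if_true]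
      exact ⟨Or.inl rfl, hc⟩
    · simp only [if_neg (nx a ha)]
      exact ⟨Or.inr (subF a ha).1, (subF a ha).2⟩

theorem SublistForall₂_mem {α : Type} {r : α → α → Prop} {l l' : List α}
    (h : List.SublistForall₂ r l l') : ∀ a ∈ l, ∃ b ∈ l', r a b := by
  induction h with
  | nil => simp
  | cons hr _ ih =>
    intro a ha
    rcases List.mem_cons.1 ha with rfl | ha
    · exact ⟨_, List.mem_cons_self, hr⟩
    · obtain ⟨b, hb, h⟩ := ih a ha
      exact ⟨b, List.mem_cons_of_mem _ hb, h⟩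
  | cons_right _ ih =>
    intro a ha
    obtain ⟨b, hb, h⟩ := ih a ha
    exact ⟨b, List.mem_cons_of_mem _ hb, h⟩

open Set.PartiallyWellOrderedOn in
theorem kruskal {C : Type} [Finite C] (o : ℕ → Ob C) (hg : ∀ n, (o n).Good) :
    ∃ i j, i < j ∧ Emb (o i) (o j) := by
  classical
  by_contra hcon
  push Not at hcon
  let rk : Ob C → ℕ := fun o => (o.V.filter (fun a => o.sub a)).card
  obtain ⟨f, hf, hmin⟩ := exists_min_bad_of_exists_bad Emb rk {o : Ob C | o.Good}
    ⟨o, hg, fun m n h => hcon m n h⟩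
  have gat : ∀ {o : Ob C} {y : ℕ}, o.Good → (o.x, y) ∈ o.R → (o.at y).Good :=
    fun h hy => ⟨h.rv, h.lt, h.tr, h.fo, (h.rv _ _ hy).2⟩
  have hrk : ∀ {o : Ob C} {y : ℕ}, o.Good → (o.x, y) ∈ o.R → rk (o.at y) < rk o := by
    intro o y h hy
    apply Finset.card_lt_card
    refine ⟨?_, ?_⟩
    · intro a ha
      rw [Finset.mem_filter] at ha ⊢
      refine ⟨ha.1, Or.inr ?_⟩
      rcases ha.2 with e | h'
      · rw [e]; exact hy
      · exact h.tr _ _ _ hy h'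
    · intro hh
      have : o.x ∈ (o.at y).V.filter (fun a => (o.at y).sub a) :=
        hh (Finset.mem_filter.2 ⟨h.xv, Or.inl rfl⟩)
      have h1 := h.lt _ _ hy
      rcases (Finset.mem_filter.1 this).2 with e | h'
      · have e : o.x = y := e
        omega
      · have := h.lt _ _ h'
        have : y < o.x := this
        omega
  have hfg : ∀ n, (f n).Good := hf.1
  let S : Set (Ob C) := {p | ∃ n y, ((f n).x, y) ∈ (f n).R ∧ p = (f n).at y}
  have hS : S.PartiallyWellOrderedOn Emb := by
    rw [iff_forall_not_isBadSeq]
    intro g hgb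
    have hgS := hgb.1
    choose n y hy hgy using hgS
    obtain ⟨k0, hk0⟩ : ∃ k0, ∀ k, n k0 ≤ n k := by
      have hne : (Set.range n).Nonempty := ⟨n 0, 0, rfl⟩
      obtain ⟨k0, hk⟩ := Nat.sInf_mem hne
      exact ⟨k0, fun k => hk ▸ Nat.sInf_le ⟨k, rfl⟩⟩
    refine hmin (n k0) (fun i => if i < n k0 then f i else g (k0 + (i - n k0))) ?_ ?_ ?_
    · intro m hm
      simp [hm]
    · simp only [lt_irrefl, if_false, Nat.sub_self, Nat.add_zero]
      rw [hgy k0]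
      exact hrk (hfg _) (hy k0)
    · refine ⟨?_, ?_⟩
      · intro i
        show Ob.Good (if i < n k0 then f i else g (k0 + (i - n k0)))
        split_ifs
        · exact hfg i
        · rw [hgy]; exact gat (hfg _) (hy _)
      · intro i j hij
        by_cases hj : j < n k0
        · simp only [hj, hij.trans hj, if_true]
          exact hf.2 i j hij
        · by_cases hi : i < n k0
          · simp only [hi, hj, if_true, if_false]
            intro hE
            rw [hgy] at hE
            exact hf.2 i _ (lt_of_lt_of_le hi (hk0 _)) (hE.lift (hfg _) (hy _))
          · simp only [hi, hj, if_false]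
            exact hgb.2 _ _ (by omega)
  obtain ⟨c, hc⟩ := Finite.exists_infinite_fiber (fun n => (f n).col (f n).x)
  have hc' : ((fun n => (f n).col (f n).x) ⁻¹' {c}).Infinite := Set.infinite_coe_iff.1 hc
  let φ : ℕ → ℕ := Nat.nth (fun n => n ∈ ((fun n => (f n).col (f n).x) ⁻¹' {c}))
  have hφ : StrictMono φ := Nat.nth_strictMono hc'
  have hφc : ∀ k, (f (φ k)).col (f (φ k)).x = c := fun k => Nat.nth_mem_of_infinite hc' k
  let ch : ℕ → List (Ob C) := fun k =>
    ((f (φ k)).V.filter (fun a => ((f (φ k)).x, a) ∈ (f (φ k)).R)).toList.map (fun y => (f (φ k)).at y)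
  have hch : ∀ k, ∀ p ∈ ch k, p ∈ S := by
    intro k p hp
    simp only [ch, List.mem_map, Finset.mem_toList, Finset.mem_filter] at hp
    obtain ⟨y, hy, rfl⟩ := hp
    exact ⟨φ k, y, hy.2, rfl⟩
  obtain ⟨i, j, hij, hE⟩ := (partiallyWellOrderedOn_sublistForall₂ Emb hS).exists_lt (f := ch) hch
  apply hf.2 _ _ (hφ hij)
  apply emb_assemble (hfg _) (hfg _)
  · rw [hφc, hφc]
  · intro y hy
    obtain ⟨p, hp, hpE⟩ := SublistForall₂_mem hE ((f (φ i)).at y) (by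
      simp only [ch, List.mem_map, Finset.mem_toList, Finset.mem_filter]
      exact ⟨y, ⟨((hfg _).rv _ _ hy).2, hy⟩, rfl⟩)
    simp only [ch, List.mem_map, Finset.mem_toList, Finset.mem_filter] at hp
    obtain ⟨y', hy', rfl⟩ := hp
    exact ⟨y', hy'.2, hpE⟩



def Tr.ext (T T' : Tr) : Prop := T.le T' ∧ ∀ a b, (a, b) ∈ T'.R → b ∈ T.V → (a, b) ∈ T.R

theorem Tr.ext.rfl {T : Tr} : T.ext T := ⟨Tr.le.rfl, fun _ _ h _ => h⟩
theorem Tr.ext.trans {T T' T'' : Tr} (h : T.ext T') (h' : T'.ext T'') : T.ext T'' :=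
  ⟨h.1.trans h'.1, fun a b hab hb => h.2 a b (h'.2 a b hab (h.1.1 hb)) hb⟩

theorem Step.ext {F : Finset Formula} {H : List Entry} {T T' : Tr} (h : Step F H T T') :
    T.ext T' := by
  refine ⟨h.le, ?_⟩
  cases h with
  | add => exact fun _ _ h _ => h
  | or => exact fun _ _ h _ => h
  | dia x y B h0 _ hy =>
    rintro a b (h | ⟨h, _⟩) hb
    · exact h
    · simp only at h
      subst h
      exact absurd (hy _ hb) (lt_irrefl _)

theorem Steps.ext {F : Finset Formula} {H : List Entry} {T T' : Tr}
    (h : Relation.ReflTransGen (Step F H) T T') : T.ext T' := by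
  induction h with
  | refl => exact Tr.ext.rfl
  | tail _ h ih => exact ih.trans h.ext

def DOk (R : Set (ℕ × ℕ)) (D : List ℕ) : Prop :=
  ∀ (j : ℕ) (hj : j < D.length) (x : ℕ), (x, D[j]) ∈ R → x ∈ D.take j

theorem DOk.snoc {R : Set (ℕ × ℕ)} {D : List ℕ} {z : ℕ} (h : DOk R D)
    (hz : ∀ a, (a, z) ∈ R → a ∈ D) : DOk R (D ++ [z]) := by
  intro j hj x hx
  by_cases hjD : j < D.length
  · rw [List.getElem_append_left hjD] at hx
    rw [List.take_append_of_le_length hjD.le]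
    exact h j hjD x hx
  · have : j = D.length := by simp at hj; omega
    subst this
    simp at hx
    simpa using hz x hx

theorem DOk.extend {R : Set (ℕ × ℕ)} (hlt : ∀ a b, (a, b) ∈ R → a < b) {D : List ℕ} (h : DOk R D)
    (A : Finset ℕ) : (∀ a b, (a, b) ∈ R → b ∈ A → a ∈ A) →
    ∃ D', D <+: D' ∧ DOk R D' ∧ (∀ a ∈ A, a ∈ D') ∧ ∀ d ∈ D', d ∈ D ∨ d ∈ A := by
  induction A using Finset.induction_on_max with
  | empty => intro _; exact ⟨D, List.prefix_rfl, h, by simp, fun d hd => Or.inl hd⟩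
  | insert m A hm ih =>
    intro hA
    obtain ⟨D', h1, h2, h3, h4⟩ := ih (by
      intro a b hab hb
      have h1 := hA a b hab (Finset.mem_insert_of_mem hb)
      rcases Finset.mem_insert.1 h1 with rfl | h1
      · exact absurd (hlt _ _ hab) (hm b hb).not_gt
      · exact h1)
    refine ⟨D' ++ [m], h1.trans (List.prefix_append _ _), h2.snoc ?_, ?_, ?_⟩
    · intro a ha
      have h1 := hA a m ha (Finset.mem_insert_self _ _)
      rcases Finset.mem_insert.1 h1 with rfl | h1
      · exact absurd (hlt _ _ ha) (lt_irrefl _)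
      · exact h3 a h1
    · intro a ha
      rcases Finset.mem_insert.1 ha with rfl | h
      · simp
      · simp [h3 a h]
    · intro d hd
      rcases List.mem_append.1 hd with hd | hd
      · exact (h4 d hd).imp_right (Finset.mem_insert_of_mem)
      · simp at hd; simp [hd]

structure Sta : Type where
  H : List Entry
  T : Tr

structure Ok (F : Finset Formula) (s : Sta) : Prop where
  wf : Wf F s.T
  sat : Satd F s.H s.T
  con : ∀ x, (x, Formula.bot) ∉ s.T.L
  zero : 0 ∈ s.T.V
  dV : ∀ d ∈ topD s.H, d ∈ s.T.V
  dok : DOk s.T.R (topD s.H)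

structure Ph (F : Finset Formula) (s s' : Sta) (P : Tr) (z : ℕ) (E : Formula) (e : Entry) : Prop where
  ext : s.T.ext P
  wf : Wf F P
  zV : z ∈ P.V
  EF : E ∈ F
  newL : ∀ a A, (a, A) ∈ P.L → (a, A) ∈ s.T.L ∨ a = z
  newV : ∀ a ∈ P.V, a ∈ s.T.V ∨ a = z
  npv : ¬ Pv s'.H P.R P.L {(z, E)}
  hist : s'.H = e :: s.H
  erel : e.S.rel = P.R
  eleft : ∀ a, a ∈ e.S.left ↔ a ∈ P.L
  eright : ∀ a, a ∈ e.S.right ↔ a = (z, E)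
  dok : DOk P.R e.D
  danc : ∀ a, a = z ∨ (a, z) ∈ P.R → a ∈ e.D
  dnew : ∀ d ∈ e.D, d ∈ topD s.H ∨ d = z ∨ (d, z) ∈ P.R
  steps : Relation.ReflTransGen (Step F s'.H) P s'.T

def Phase (F : Finset Formula) (s s' : Sta) : Prop := ∃ P z E e, Ph F s s' P z E e

theorem Ph.ext' {F : Finset Formula} {s s' : Sta} {P : Tr} {z : ℕ} {E : Formula} {e : Entry}
    (h : Ph F s s' P z E e) : P.ext s'.T := Steps.ext h.steps

theorem Phase.ext {F : Finset Formula} {s s' : Sta} (h : Phase F s s') : s.T.ext s'.T := by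
  obtain ⟨P, z, E, e, h⟩ := h
  exact h.ext.trans h.ext'

theorem exists_phase {F : Finset Formula} (hF : SubCl F) {s : Sta} (hs : Ok F s) {P : Tr} {z : ℕ}
    {E : Formula} (hext : s.T.ext P) (hwf : Wf F P) (hz : z ∈ P.V) (hE : E ∈ F)
    (hL : ∀ a A, (a, A) ∈ P.L → (a, A) ∈ s.T.L ∨ a = z) (hV : ∀ a ∈ P.V, a ∈ s.T.V ∨ a = z)
    (hn : ¬ Pv s.H P.R P.L {(z, E)}) :
    ∃ s', Phase F s s' ∧ Ok F s' ∧ P.le s'.T ∧ (z, E) ∉ s'.T.L := by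
  classical
  have dokP : DOk P.R (topD s.H) := by
    intro j hj x hx
    exact hs.dok j hj x (hext.2 _ _ hx (hs.dV _ (List.getElem_mem hj)))
  obtain ⟨D, d1, d2, d3, d4⟩ := dokP.extend hwf.lt (P.V.filter (fun a => a = z ∨ (a, z) ∈ P.R)) (by
    intro a b hab hb
    rw [Finset.mem_filter] at hb ⊢
    refine ⟨(hwf.rv _ _ hab).1, Or.inr ?_⟩
    rcases hb.2 with rfl | h
    · exact hab
    · exact hwf.tr _ _ _ hab h)
  let e : Entry := ⟨⟨P.R, hwf.finL.toFinset.val, {(z, E)}⟩, D⟩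
  have hn' : ¬ Pv (e :: s.H) P.R P.L {(z, E)} := by
    intro h
    refine hn (Pv.push D d1 ?_ ?_ h)
    · intro a; rw [Finset.mem_val, Set.Finite.mem_toFinset]
    · intro a; simp
  obtain ⟨T1, t1, t2, t3, t4⟩ := saturate hF (e :: s.H) {(z, E)} (Set.finite_singleton _) P hwf hn'
    (by
      intro x A h
      simp only [Set.mem_singleton_iff, Prod.mk.injEq] at h
      rw [h.1]; exact hz)
  have hx := Steps.ext t1
  have hzE : (z, E) ∉ T1.L := fun h => t4 (Pv.of_mem t2.finR h rfl)
  have hDP : ∀ d ∈ D, d ∈ P.V := by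
    intro d hd
    rcases d4 d hd with h | h
    · exact hext.1.1 (hs.dV d h)
    · exact (Finset.mem_filter.1 h).1
  refine ⟨⟨e :: s.H, T1⟩, ⟨P, z, E, e, hext, hwf, hz, hE, hL, hV, hn', rfl, rfl, ?_, ?_, d2, ?_, ?_,
    t1⟩, ⟨t2, t3, ?_, hx.1.1 (hext.1.1 hs.zero), ?_, ?_⟩, hx.1, hzE⟩
  · intro a
    show a ∈ hwf.finL.toFinset.val ↔ _
    rw [Finset.mem_val, Set.Finite.mem_toFinset]
  · intro a
    show a ∈ ({(z, E)} : Multiset LFormula) ↔ _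
    simp
  · intro a ha
    refine d3 a (Finset.mem_filter.2 ⟨?_, ha⟩)
    rcases ha with rfl | ha
    · exact hz
    · exact (hwf.rv _ _ ha).1
  · intro d hd
    rcases d4 d hd with h | h
    · exact Or.inl h
    · exact Or.inr (Finset.mem_filter.1 h).2
  · intro x h
    exact t4 (Pv.botL h)
  · exact fun d hd => hx.1.1 (hDP d hd)
  · intro j hj x hxj
    exact d2 j hj x (hx.2 _ _ hxj (hDP _ (List.getElem_mem hj)))

def Agree (x : ℕ) (T T' : Tr) : Prop :=
  (∀ a, (x, a) ∈ T'.R → (x, a) ∈ T.R) ∧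
    ∀ a A, (a = x ∨ (x, a) ∈ T.R) → (a, A) ∈ T'.L → (a, A) ∈ T.L

theorem locality {F : Finset Formula} (hF : SubCl F) {H H' : List Entry} {T : Tr} (x : ℕ)
    (hx : x ∈ T.V) (hT : Satd F H T) (hwT : Wf F T) {P T1 : Tr}
    (h : Relation.ReflTransGen (Step F H') P T1) :
    Agree x T P → T.ext P → Wf F P → Agree x T T1 ∨ ∃ Tc y A, Agree x T Tc ∧ T.ext Tc ∧ Wf F Tc ∧
      Tc.le T1 ∧ (y = x ∨ (x, y) ∈ T.R) ∧ A ∈ F ∧ (y, A) ∉ T.L ∧ Pv H' Tc.R Tc.L {(y, A)} := by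
  induction h using Relation.ReflTransGen.head_induction_on with
  | refl => intro h _ _; exact Or.inl h
  | @head P P' hst hsts ih =>
    intro hag hext hw
    have hle := (Steps.ext (Relation.ReflTransGen.head hst hsts)).1
    have hext' := hext.trans hst.ext
    have hw' := hst.wf hF hw
    have insL : ∀ y C, ¬ (y = x ∨ (x, y) ∈ T.R) → Agree x T ⟨P.V, P.R, insert (y, C) P.L⟩ := by
      intro y C hy
      refine ⟨hag.1, ?_⟩
      rintro a A ha (h | h)
      · simp only [Prod.mk.injEq] at h
        exact absurd (h.1 ▸ ha) hy
      · exact hag.2 a A ha h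
    cases hst with
    | add y A hy hA hn hp =>
      by_cases hyx : y = x ∨ (x, y) ∈ T.R
      · right
        exact ⟨P, y, A, hag, hext, hw, hle, hyx, hA, fun h => hn (hext.1.2.2 h), hp⟩
      · exact ih (insL y A hyx) hext' hw'
    | or y A B C h0 hA hB hC =>
      by_cases hyx : y = x ∨ (x, y) ∈ T.R
      · exfalso
        rcases hT.prime y A B (hag.2 _ _ hyx h0) with h | h
        · exact hA (hext.1.2.2 h)
        · exact hB (hext.1.2.2 h)
      · exact ih (insL y C hyx) hext' hw'
    | dia y v B h0 hn hv =>
      by_cases hyx : y = x ∨ (x, y) ∈ T.R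
      · exfalso
        obtain ⟨a, h1, h2⟩ := hT.wit y B (hag.2 _ _ hyx h0)
        exact hn a (hext.1.2.1 h1) (hext.1.2.2 h2)
      · refine ih ⟨?_, ?_⟩ hext' hw'
        · rintro a (h | ⟨_, h⟩)
          · exact hag.1 a h
          · exfalso
            apply hyx
            rcases h with h | h
            · exact Or.inl h.symm
            · exact Or.inr (hag.1 _ h)
        · rintro a A ha (h | h)
          · exfalso
            simp only [Prod.mk.injEq] at h
            have : a ∈ T.V := by
              rcases ha with rfl | ha
              · exact hx
              · exact (hwT.rv _ _ ha).2
            have := hv a (hext.1.1 this)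
            omega
          · exact hag.2 a A ha h

open Classical in
noncomputable def glue (R : Set (ℕ × ℕ)) (x : ℕ) (f : ℕ → ℕ) (a : ℕ) : ℕ :=
  if a = x ∨ (x, a) ∈ R then f a else a

theorem glue_in {R : Set (ℕ × ℕ)} {x : ℕ} {f : ℕ → ℕ} {a : ℕ} (h : a = x ∨ (x, a) ∈ R) :
    glue R x f a = f a := by unfold glue; rw [if_pos h]

theorem glue_out {R : Set (ℕ × ℕ)} {x : ℕ} {f : ℕ → ℕ} {a : ℕ} (h : ¬ (a = x ∨ (x, a) ∈ R)) :
    glue R x f a = a := by unfold glue; rw [if_neg h]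

theorem glue_hom {F : Finset Formula} {T T' : Tr} (hw : Wf F T) (hw' : Wf F T') (hR : T.R ⊆ T'.R)
    {x x' : ℕ} {f : ℕ → ℕ} (hx : ∀ a, (a, x) ∈ T.R → (a, x') ∈ T'.R)
    (hf : ∀ a b, (a = x ∨ (x, a) ∈ T.R) → (b = x ∨ (x, b) ∈ T.R) → (a, b) ∈ T.R → (f a, f b) ∈ T'.R)
    (hf' : ∀ a, (a = x ∨ (x, a) ∈ T.R) → (f a = x' ∨ (x', f a) ∈ T'.R)) (a b : ℕ)
    (hab : (a, b) ∈ T.R) : (glue T.R x f a, glue T.R x f b) ∈ T'.R := by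
  by_cases ha : a = x ∨ (x, a) ∈ T.R
  · have hb : b = x ∨ (x, b) ∈ T.R := by
      right
      rcases ha with rfl | ha
      · exact hab
      · exact hw.tr _ _ _ ha hab
    rw [glue_in ha, glue_in hb]
    exact hf a b ha hb hab
  · rw [glue_out ha]
    by_cases hb : b = x ∨ (x, b) ∈ T.R
    · rw [glue_in hb]
      have hax : (a, x) ∈ T.R := by
        rcases hb with rfl | hb
        · exact hab
        · rcases hw.fo _ _ _ hab hb with h | h | h
          · exact absurd (Or.inl h) ha
          · exact h
          · exact absurd (Or.inr h) ha
      rcases hf' b hb with h | h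
      · rw [h]; exact hx a hax
      · exact hw'.tr _ _ _ (hx a hax) h
    · rw [glue_out hb]
      exact hR hab



abbrev Col (F : Finset Formula) (N : Finset ℕ) : Type :=
  Set {A // A ∈ F} × Set {A // A ∈ F} × Set {d // d ∈ N}

def mkCol (F : Finset Formula) (N : Finset ℕ) (T : Tr) (z : ℕ) (E : Formula) (a : ℕ) : Col F N :=
  ({A | (a, A.1) ∈ T.L}, {A | a = z ∧ A.1 = E}, {d | d.1 = a})

def mkOb (F : Finset Formula) (N : Finset ℕ) (T : Tr) (z : ℕ) (E : Formula) (x : ℕ) : Ob (Col F N) :=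
  ⟨T.V, T.R, mkCol F N T z E, x⟩

theorem mkOb_good {F : Finset Formula} {N : Finset ℕ} {T : Tr} {z : ℕ} {E : Formula} {x : ℕ}
    (h : Wf F T) (hx : x ∈ T.V) : (mkOb F N T z E x).Good := ⟨h.rv, h.lt, h.tr, h.fo, hx⟩

theorem mkCol_L {F : Finset Formula} {N : Finset ℕ} {T T' : Tr} {z z' : ℕ} {E E' : Formula} {a a' : ℕ}
    (hw : Wf F T) (h : mkCol F N T' z' E' a' = mkCol F N T z E a) {A : Formula} (hA : (a, A) ∈ T.L) :
    (a', A) ∈ T'.L := by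
  have h1 : ({A | (a', A.1) ∈ T'.L} : Set {A // A ∈ F}) = {A | (a, A.1) ∈ T.L} := congrArg Prod.fst h
  have h2 : (⟨A, (hw.lv _ _ hA).2⟩ : {A // A ∈ F}) ∈ ({A | (a, A.1) ∈ T.L} : Set {A // A ∈ F}) := hA
  rw [← h1] at h2
  exact h2

theorem mkCol_z {F : Finset Formula} {N : Finset ℕ} {T T' : Tr} {z z' : ℕ} {E E' : Formula} {a' : ℕ}
    (hE : E ∈ F) (h : mkCol F N T' z' E' a' = mkCol F N T z E z) : a' = z' ∧ E = E' := by
  have h1 : ({A | a' = z' ∧ A.1 = E'} : Set {A // A ∈ F}) = {A | z = z ∧ A.1 = E} :=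
    congrArg (fun p => p.2.1) h
  have h2 : (⟨E, hE⟩ : {A // A ∈ F}) ∈ ({A | z = z ∧ A.1 = E} : Set {A // A ∈ F}) := ⟨rfl, rfl⟩
  rw [← h1] at h2
  exact h2

theorem mkCol_N {F : Finset Formula} {N : Finset ℕ} {T T' : Tr} {z z' : ℕ} {E E' : Formula} {a a' : ℕ}
    (hN : a ∈ N) (h : mkCol F N T' z' E' a' = mkCol F N T z E a) : a' = a := by
  have h1 : ({d | d.1 = a'} : Set {d // d ∈ N}) = {d | d.1 = a} :=
    congrArg (fun p => p.2.2) h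
  have h2 : (⟨a, hN⟩ : {d // d ∈ N}) ∈ ({d | d.1 = a} : Set {d // d ∈ N}) := rfl
  rw [← h1] at h2
  exact Eq.symm h2

theorem no_inf {F : Finset Formula} (hF : SubCl F) (u : ℕ → Sta) (hOk : ∀ k, Ok F (u k))
    (hPh : ∀ k, Phase F (u k) (u (k + 1))) (g : ℕ → ℕ)
    (hg : ∀ n, ∃ k, (g n, g (n + 1)) ∈ (u k).T.R) : False := by
  classical
  have uext : ∀ i j, i ≤ j → (u i).T.ext (u j).T := by
    intro i j hij
    induction j, hij using Nat.le_induction with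
    | base => exact Tr.ext.rfl
    | succ j _ ih => exact ih.trans (hPh j).ext
  choose P z E e hP using hPh
  have hH : ∀ i j, i ≤ j → (u i).H <:+ (u j).H := by
    intro i j hij
    induction j, hij using Nat.le_induction with
    | base => exact List.suffix_rfl
    | succ j _ ih => rw [(hP j).hist]; exact ih.trans (List.suffix_cons _ _)
  have Pext : ∀ i j, i < j → (P i).ext (P j) := by
    intro i j hij
    exact ((hP i).ext'.trans (uext (i + 1) j hij)).trans (hP j).ext
  have hgR : ∀ i j, i < j → ∃ k, ∀ k', k ≤ k' → (g i, g j) ∈ (u k').T.R := by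
    intro i j hij
    induction j, hij using Nat.le_induction with
    | base =>
      obtain ⟨k, hk⟩ := hg i
      exact ⟨k, fun k' h => (uext k k' h).1.2.1 hk⟩
    | succ j _ ih =>
      obtain ⟨k, hk⟩ := ih
      obtain ⟨k1, hk1⟩ := hg j
      exact ⟨max k k1, fun k' h => (hOk k').wf.tr _ _ _ (hk k' (le_trans (le_max_left _ _) h))
        ((uext k1 k' (le_trans (le_max_right _ _) h)).1.2.1 hk1)⟩
  have hgmono : StrictMono g := strictMono_nat_of_lt_succ (fun n => by
    obtain ⟨k, hk⟩ := hg n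
    exact (hOk k).wf.lt _ _ hk)
  -- claim 1
  have claim1 : ∀ l N, ∃ n, N ≤ n ∧ (z n = g l ∨ (g l, z n) ∈ (P n).R) := by
    intro l N0
    by_contra hcon
    push Not at hcon
    obtain ⟨k0, hk0⟩ := hgR l (l + 1) (Nat.lt_succ_self l)
    set x := g l with hx
    set N := max N0 k0 with hN
    have hxV : ∀ n, N ≤ n → x ∈ (u n).T.V := fun n hn =>
      ((hOk n).wf.rv _ _ (hk0 n (le_trans (le_max_right _ _) hn))).1
    have hz : ∀ n, N ≤ n → ¬ (z n = x ∨ (x, z n) ∈ (P n).R) := by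
      intro n hn h
      have := hcon n (le_trans (le_max_left _ _) hn)
      exact h.elim this.1 this.2
    have agP : ∀ n, N ≤ n → Agree x (u n).T (P n) := by
      intro n hn
      refine ⟨?_, ?_⟩
      · intro a ha
        rcases (hP n).newV a ((hP n).wf.rv _ _ ha).2 with h | h
        · exact (hP n).ext.2 _ _ ha h
        · subst h; exact absurd (Or.inr ha) (hz n hn)
      · intro a A ha hA
        rcases (hP n).newL a A hA with h | h
        · exact h
        · subst h
          exact absurd (ha.imp_right (fun h => (hP n).ext.1.2.1 h)) (hz n hn)
    let Q : ℕ → Tr → ℕ → Formula → Prop := fun n Tc y A =>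
      Agree x (u n).T Tc ∧ (u n).T.ext Tc ∧ Wf F Tc ∧
      Tc.le (u (n + 1)).T ∧ (y = x ∨ (x, y) ∈ (u n).T.R) ∧ A ∈ F ∧ (y, A) ∉ (u n).T.L ∧
        Pv (u (n + 1)).H Tc.R Tc.L {(y, A)}
    have inf : ∀ M, ∃ n > M, N ≤ n ∧ ∃ Tc y A, Q n Tc y A := by
      intro M0
      by_contra hno
      push Not at hno
      set M := max (M0 + 1) N with hM
      have hag : ∀ n, M ≤ n → Agree x (u n).T (u (n + 1)).T := by
        intro n hn
        have hnN : N ≤ n := le_trans (le_max_right _ _) hn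
        rcases locality hF x (hxV n hnN) (hOk n).sat (hOk n).wf (hP n).steps (agP n hnN) (hP n).ext
          (hP n).wf with h | ⟨Tc, y, A, h⟩
        · exact h
        · exact absurd h (hno n (lt_of_lt_of_le (Nat.lt_succ_self _) (le_trans (le_max_left _ _) hn))
            hnN Tc y A)
      have hst : ∀ n, M ≤ n → ∀ a, (x, a) ∈ (u n).T.R → (x, a) ∈ (u M).T.R := by
        intro n hn
        induction n, hn using Nat.le_induction with
        | base => exact fun a h => h
        | succ n hn ih => exact fun a h => ih a ((hag n hn).1 a h)
      have hin : ∀ i, g (l + 1 + i) ∈ (u M).T.V := by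
        intro i
        obtain ⟨k, hk⟩ := hgR l (l + 1 + i) (by omega)
        exact ((hOk M).wf.rv _ _ (hst (max M k) (le_max_left _ _) _ (hk _ (le_max_right _ _)))).2
      have hinj : Function.Injective (fun i => g (l + 1 + i)) := by
        intro i j hij
        have := hgmono.injective hij
        omega
      exact (Set.infinite_range_of_injective hinj)
        ((u M).T.V.finite_toSet.subset (by rintro _ ⟨i, rfl⟩; exact hin i))
    obtain ⟨φ, hφ, hφQ⟩ := Filter.extraction_forall_of_frequently
      (P := fun _ n => N ≤ n ∧ ∃ Tc y A, Q n Tc y A) (fun _ => Filter.frequently_atTop'.2 inf)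
    choose hφN Tc y A hQ using hφQ
    obtain ⟨k, k', hkk, f, hf1, hf2⟩ := kruskal
      (fun k => mkOb F (topD (u N).H).toFinset (u (φ k)).T (y k) (A k) x)
      (fun k => mkOb_good (hOk _).wf (hxV _ (hφN k)))
    obtain ⟨q1, q2, q3, q4, q5, q6, q7, q8⟩ := hQ k
    obtain ⟨r1, r2, r3, r4, r5, r6, r7, r8⟩ := hQ k'
    have hlt : φ k + 1 ≤ φ k' := hφ hkk
    have hsub : ∀ a, (a = x ∨ (x, a) ∈ (Tc k).R) → (a = x ∨ (x, a) ∈ (u (φ k)).T.R) :=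
      fun a h => h.imp_right (q1.1 a)
    have hsub' : ∀ a, (a = x ∨ (x, a) ∈ (u (φ k)).T.R) → (a = x ∨ (x, a) ∈ (Tc k).R) :=
      fun a h => h.imp_right (fun h => q2.1.2.1 h)
    have hTle : (Tc k).le (u (φ k')).T := q4.trans (uext _ _ hlt).1
    -- names
    have hnames : ∀ n, N ≤ n → ∀ d ∈ topD (u n).H, (d = x ∨ (x, d) ∈ (u n).T.R) → d ∈ topD (u N).H := by
      intro n hn
      induction n, hn using Nat.le_induction with
      | base => exact fun d h _ => h
      | succ n hn ih =>
        intro d hd hdx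
        rw [(hP n).hist] at hd
        have hback : ∀ d, d ∈ (P n).V → (d = x ∨ (x, d) ∈ (u (n + 1)).T.R) →
            (d = x ∨ (x, d) ∈ (P n).R) :=
          fun d hdV h => h.imp_right (fun h => (hP n).ext'.2 _ _ h hdV)
        rcases (hP n).dnew d hd with h | h
        · refine ih d h ?_
          have hdV := (hOk n).dV d h
          exact hdx.imp_right (fun h => (uext n (n + 1) (Nat.le_succ n)).2 _ _ h hdV)
        · exfalso
          have hdV : d ∈ (P n).V := by
            rcases h with rfl | h
            · exact (hP n).zV
            · exact ((hP n).wf.rv _ _ h).1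
          have hd' := hback d hdV hdx
          apply hz n hn
          rcases h with rfl | h
          · exact hd'
          · right
            rcases hd' with rfl | hd'
            · exact h
            · exact (hP n).wf.tr _ _ _ hd' h
    have hpv : Pv (u (φ k')).H (u (φ k')).T.R (u (φ k')).T.L {(y k', A k')} := by
      refine q8.hom (glue (Tc k).R x f) (hH _ _ hlt) ?_ ?_ ?_ ?_
      · intro d hd
        by_cases hdx : d = x ∨ (x, d) ∈ (Tc k).R
        · rw [glue_in hdx]
          have hdN := hnames (φ k + 1) (le_trans (hφN k) (Nat.le_succ _)) d hd
            (hdx.imp_right (fun h => q4.2.1 h))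
          exact mkCol_N (List.mem_toFinset.2 hdN) (hf2 d (hsub d hdx)).2
        · exact glue_out hdx
      · refine glue_hom q3 (hOk _).wf hTle.2.1 (fun a h => hTle.2.1 h) ?_ ?_
        · intro a b ha hb hab
          refine hf1 a b (hsub a ha) (hsub b hb) (q2.2 a b hab ?_)
          rcases hsub b hb with rfl | h
          · exact hxV _ (hφN k)
          · exact ((hOk _).wf.rv _ _ h).2
        · intro a ha
          exact (hf2 a (hsub a ha)).1
      · intro a B hB
        by_cases hax : a = x ∨ (x, a) ∈ (Tc k).R
        · rw [glue_in hax]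
          exact mkCol_L (hOk _).wf (hf2 a (hsub a hax)).2 (q1.2 a B (hsub a hax) hB)
        · rw [glue_out hax]
          exact hTle.2.2 hB
      · intro a B hB
        simp only [Set.mem_singleton_iff, Prod.mk.injEq] at hB
        obtain ⟨rfl, rfl⟩ := hB
        rw [glue_in (hsub' _ q5)]
        have := mkCol_z q6 (hf2 _ q5).2
        simp only [Set.mem_singleton_iff, Prod.mk.injEq]
        exact this
    have hyV : y k' ∈ (u (φ k')).T.V := by
      rcases r5 with h | h
      · rw [h]; exact hxV _ (hφN k')
      · exact ((hOk _).wf.rv _ _ h).2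
    exact r7 ((hOk _).sat.closed _ _ hyV r6 hpv)
  -- claim 2
  obtain ⟨φ, hφ, hφP⟩ := Filter.extraction_forall_of_frequently
    (P := fun n i => (z i = g n ∨ (g n, z i) ∈ (P i).R) ∧ g n ∈ (P i).V ∧
      ∀ m < n, (g m, g n) ∈ (P i).R) (by
    intro n
    rw [Filter.frequently_atTop]
    intro N
    have hall : ∃ k, ∀ k', k ≤ k' → ∀ m < n, (g m, g n) ∈ (u k').T.R := by
      choose! κ hκ using fun m (h : m < n) => hgR m n h
      refine ⟨(Finset.range n).sup κ, fun k' hk' m hm => hκ m hm k' (le_trans ?_ hk')⟩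
      exact Finset.le_sup (f := κ) (Finset.mem_range.2 hm)
    obtain ⟨k, hk⟩ := hall
    obtain ⟨k1, hk1⟩ := hgR n (n + 1) (Nat.lt_succ_self n)
    obtain ⟨i, hi, hi2⟩ := claim1 n (max N (max k k1))
    have h1 : N ≤ i := by omega
    have h2 : k ≤ i := by omega
    have h3 : k1 ≤ i := by omega
    exact ⟨i, h1, hi2, (hP i).ext.1.1 ((hOk i).wf.rv _ _ (hk1 i h3)).1,
      fun m hm => (hP i).ext.1.2.1 (hk i h2 m hm)⟩)
  obtain ⟨m, n, hmn, f, hf1, hf2⟩ := kruskal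
      (fun n => mkOb F ∅ (P (φ n)) (z (φ n)) (E (φ n)) (g n))
      (fun n => mkOb_good (hP _).wf (hφP n).2.1)
  have hlt : φ m < φ n := hφ hmn
  have hle := (Pext _ _ hlt).1
  have hxx : (g m, g n) ∈ (P (φ n)).R := (hφP n).2.2 m hmn
  apply (hP (φ n)).npv
  have hxD : g m ∈ (e (φ m)).D := by
    apply (hP (φ m)).danc
    rcases (hφP m).1 with h | h
    · exact Or.inl h.symm
    · exact Or.inr h
  have hex : ∃ p, ∃ h : p < (e (φ m)).D.length, (e (φ m)).D[p] = g m := List.getElem_of_mem hxD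
  obtain ⟨hp, hpe⟩ := Nat.find_spec hex
  refine Pv.jump (e := e (φ m)) (h' := (u (φ m)).H) ?_ (glue (P (φ m)).R (g m) f) (Nat.find hex) hp
    ?_ ?_ ?_ ?_ ?_
  · rw [← (hP (φ m)).hist]
    exact hH _ _ (by omega)
  · intro d hd
    apply glue_out
    rintro (hdx | hdx)
    · subst hdx
      obtain ⟨j, hj, hjd⟩ := List.getElem_of_mem hd
      rw [List.getElem_take] at hjd
      rw [List.length_take] at hj
      have := Nat.find_min' hex ⟨by omega, hjd⟩
      omega
    · obtain ⟨j, hj, hjd⟩ := List.getElem_of_mem hd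
      rw [List.getElem_take] at hjd
      rw [List.length_take] at hj
      have h1 := (hP (φ m)).dok j (by omega) (g m) (by rw [hjd]; exact hdx)
      obtain ⟨i, hi, hid⟩ := List.getElem_of_mem h1
      rw [List.getElem_take] at hid
      rw [List.length_take] at hi
      have := Nat.find_min' hex ⟨by omega, hid⟩
      omega
  · rw [hpe, glue_in (Or.inl rfl)]
    rcases (hf2 (g m) (Or.inl rfl)).1 with h | h
    · rw [h]; exact hxx
    · exact (hP _).wf.tr _ _ _ hxx h
  · intro a b hab
    rw [(hP _).erel] at hab
    refine glue_hom (hP _).wf (hP _).wf hle.2.1 (x' := g n) ?_ hf1 (fun a ha => (hf2 a ha).1) a b hab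
    intro a ha
    exact (hP _).wf.tr _ _ _ (hle.2.1 ha) hxx
  · intro a B hB
    rw [(hP _).eleft] at hB
    by_cases hax : a = g m ∨ (g m, a) ∈ (P (φ m)).R
    · rw [glue_in hax]
      exact mkCol_L (hP _).wf (hf2 a hax).2 hB
    · rw [glue_out hax]
      exact hle.2.2 hB
  · intro a B hB
    rw [(hP _).eright] at hB
    simp only [Prod.mk.injEq] at hB
    obtain ⟨rfl, rfl⟩ := hB
    rw [glue_in (hφP m).1]
    have := mkCol_z (hP _).EF (hf2 _ (hφP m).1).2
    simp only [Set.mem_singleton_iff, Prod.mk.injEq]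
    exact this



structure Wd (F : Finset Formula) : Type where
  l : List Sta
  ne : l ≠ []
  ch : List.IsChain (Phase F) l
  ok : ∀ s ∈ l, Ok F s

def Wd.cur {F : Finset Formula} (w : Wd F) : Sta := w.l.getLast w.ne

theorem Wd.cok {F : Finset Formula} (w : Wd F) : Ok F w.cur := w.ok _ (List.getLast_mem w.ne)

def Wd.le {F : Finset Formula} (w w' : Wd F) : Prop := w.l <+: w'.l

theorem Wd.chain_le {F : Finset Formula} (w : Wd F) (i j : ℕ) (hij : i ≤ j) (hj : j < w.l.length) :
    (w.l[i]'(by omega)).T.le (w.l[j]).T := by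
  induction j, hij using Nat.le_induction with
  | base => exact Tr.le.rfl
  | succ j hij ih =>
    exact (ih (by omega)).trans (List.isChain_iff_getElem.1 w.ch j hj).ext.1

theorem Wd.cur_eq {F : Finset Formula} (w : Wd F) :
    w.cur = w.l[w.l.length - 1]'(by have := List.length_pos_of_ne_nil w.ne; omega) := by
  unfold Wd.cur
  rw [List.getLast_eq_getElem]

theorem Wd.mono {F : Finset Formula} {w w' : Wd F} (h : w.le w') : w.cur.T.le w'.cur.T := by
  have h1 := List.length_pos_of_ne_nil w.ne
  have h2 : w.l.length ≤ w'.l.length := List.IsPrefix.length_le h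
  have h3 := w'.chain_le (w.l.length - 1) (w'.l.length - 1) (by omega) (by omega)
  rw [Wd.cur_eq, Wd.cur_eq, List.IsPrefix.getElem h]
  exact h3

def kr (F : Finset Formula) : Kripke (Wd F) ℕ where
  le := Wd.le
  le_refl _ := List.prefix_rfl
  le_trans _ _ _ h h' := List.IsPrefix.trans h h'
  le_antisymm u v h h' := by
    have := List.IsPrefix.eq_of_length_le h (List.IsPrefix.length_le h')
    cases u; cases v; simp at this; subst this; rfl
  Dom w := {x | x ∈ w.cur.T.V}
  Dom_ne w := ⟨0, w.cok.zero⟩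
  Dom_mono w w' h x hx := (Wd.mono h).1 hx
  Pr w p := {x | (x, Formula.atom p) ∈ w.cur.T.L}
  Pr_sub w p x hx := (w.cok.wf.lv _ _ hx).1
  Pr_mono w w' p h x hx := (Wd.mono h).2.2 hx
  Rel w d e := (d, e) ∈ w.cur.T.R
  Rel_dom w d e h := w.cok.wf.rv _ _ h
  Rel_mono w w' d e h hd := (Wd.mono h).2.1 hd

theorem Wd.extend {F : Finset Formula} (w : Wd F) {s : Sta} (h : Phase F w.cur s) (hs : Ok F s) :
    ∃ w' : Wd F, w.le w' ∧ w'.cur = s := by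
  refine ⟨⟨w.l ++ [s], by simp, ?_, ?_⟩, List.prefix_append _ _, ?_⟩
  · rw [List.isChain_append]
    refine ⟨w.ch, by simp, ?_⟩
    intro x hx y hy
    rw [List.getLast?_eq_getLast_of_ne_nil w.ne] at hx
    simp at hx hy
    subst hx; subst hy
    exact h
  · intro t ht
    rcases List.mem_append.1 ht with ht | ht
    · exact w.ok t ht
    · simp at ht; rw [ht]; exact hs
  · simp [Wd.cur]

theorem truth {F : Finset Formula} (hF : SubCl F) (A : Formula) : A ∈ F → ∀ (w : Wd F) (x : ℕ),
    x ∈ w.cur.T.V → (ksat (kr F) w x A ↔ (x, A) ∈ w.cur.T.L) := by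
  induction A with
  | atom p => intro _ w x _; exact Iff.rfl
  | bot => intro _ w x _; exact ⟨False.elim, fun h => w.cok.con _ h⟩
  | and A B ihA ihB =>
    intro hA w x hx
    obtain ⟨h1, h2⟩ := hF.and _ _ hA
    have ok := w.cok
    simp only [ksat]
    rw [ihA h1 w x hx, ihB h2 w x hx]
    constructor
    · rintro ⟨ha, hb⟩
      exact ok.sat.closed _ _ hx hA (Pv.andR (Pv.of_mem ok.wf.finR ha (by simp))
        (Pv.of_mem ok.wf.finR hb (by simp)))
    · intro h
      exact ⟨ok.sat.closed _ _ hx h1 (Pv.andL₁ h (Pv.of_mem ok.wf.finR (Set.mem_insert _ _) (by simp))),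
        ok.sat.closed _ _ hx h2 (Pv.andL₂ h (Pv.of_mem ok.wf.finR (Set.mem_insert _ _) (by simp)))⟩
  | or A B ihA ihB =>
    intro hA w x hx
    obtain ⟨h1, h2⟩ := hF.or _ _ hA
    have ok := w.cok
    simp only [ksat]
    rw [ihA h1 w x hx, ihB h2 w x hx]
    constructor
    · rintro (ha | hb)
      · exact ok.sat.closed _ _ hx hA (Pv.orR₁ (Pv.of_mem ok.wf.finR ha (by simp)))
      · exact ok.sat.closed _ _ hx hA (Pv.orR₂ (Pv.of_mem ok.wf.finR hb (by simp)))
    · exact ok.sat.prime _ _ _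
  | dia A ihA =>
    intro hA w x hx
    have h1 := hF.dia _ hA
    have ok := w.cok
    simp only [ksat]
    constructor
    · rintro ⟨e, he, h⟩
      have he' : (x, e) ∈ w.cur.T.R := he
      rw [ihA h1 w e (ok.wf.rv _ _ he').2] at h
      exact ok.sat.closed _ _ hx hA (Pv.diaR he' (Pv.of_mem ok.wf.finR h (by simp)))
    · intro h
      obtain ⟨y, hy, h⟩ := ok.sat.wit _ _ h
      exact ⟨y, hy, (ihA h1 w y (ok.wf.rv _ _ hy).2).2 h⟩
  | imp A B ihA ihB =>
    intro hA w x hx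
    obtain ⟨h1, h2⟩ := hF.imp _ _ hA
    simp only [ksat]
    constructor
    · intro h
      by_contra hn
      have ok := w.cok
      have hn' : ¬ Pv w.cur.H w.cur.T.R (insert (x, A) w.cur.T.L) {(x, B)} := fun h =>
        hn (ok.sat.closed _ _ hx hA (Pv.impR h))
      obtain ⟨s', p1, p2, p3, p4⟩ := exists_phase hF ok
        (P := ⟨w.cur.T.V, w.cur.T.R, insert (x, A) w.cur.T.L⟩) (z := x) (E := B)
        ⟨⟨subset_rfl, subset_rfl, Set.subset_insert _ _⟩, fun _ _ h _ => h⟩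
        (wf_addL ok.wf hx h1) hx h2 (by
          rintro a C (h | h)
          · simp only [Prod.mk.injEq] at h; exact Or.inr h.1
          · exact Or.inl h) (fun a h => Or.inl h) hn'
      obtain ⟨w', q1, q2⟩ := w.extend p1 p2
      subst q2
      have hx' := p3.1 hx
      exact p4 ((ihB h2 w' x hx').1 (h w' q1 ((ihA h1 w' x hx').2 (p3.2.2 (Set.mem_insert _ _)))))
    · intro h w' hw ha
      have hx' := (Wd.mono hw).1 hx
      have ok := w'.cok
      rw [ihA h1 w' x hx'] at ha
      rw [ihB h2 w' x hx']
      exact ok.sat.closed _ _ hx' h2 (Pv.impL ((Wd.mono hw).2.2 h)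
        (Pv.of_mem ok.wf.finR ha (by simp)) (Pv.of_mem ok.wf.finR (Set.mem_insert _ _) (by simp)))
  | box A ihA =>
    intro hA w x hx
    have h1 := hF.box _ hA
    simp only [ksat]
    constructor
    · intro h
      by_contra hn
      have ok := w.cok
      obtain ⟨y, hy⟩ : ∃ y, ∀ v ∈ w.cur.T.V, v < y :=
        ⟨w.cur.T.V.sup id + 1, fun v hv => Nat.lt_succ_of_le (Finset.le_sup (f := id) hv)⟩
      have hyV : y ∉ w.cur.T.V := fun h => lt_irrefl _ (hy y h)
      have hn' : ¬ Pv w.cur.H (addChild w.cur.T.R x y) w.cur.T.L {(y, A)} := by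
        intro h
        refine hn (ok.sat.closed _ _ hx hA (Pv.boxR ok.wf.finR ⟨?_, ?_, ?_, ?_⟩ ?_ h))
        · exact fun h => hyV (ok.dV _ h)
        · rintro ⟨v, h | h⟩
          · exact hyV (ok.wf.rv _ _ h).1
          · exact hyV (ok.wf.rv _ _ h).2
        · exact fun A h => hyV (ok.wf.lv _ _ h).1
        · simp
        · rintro rfl; exact hyV hx
      obtain ⟨s', p1, p2, p3, p4⟩ := exists_phase hF ok
        (P := ⟨insert y w.cur.T.V, addChild w.cur.T.R x y, w.cur.T.L⟩) (z := y) (E := A)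
        ⟨⟨Finset.subset_insert _ _, fun _ h => Or.inl h, subset_rfl⟩, by
          rintro a b (h | ⟨h, _⟩) hb
          · exact h
          · simp only at h
            subst h
            exact absurd hb hyV⟩
        (wf_child ok.wf hx hy (fun z A h => Or.inl h)) (Finset.mem_insert_self _ _) h1
        (fun a C h => Or.inl h) (by
          intro a h
          rcases Finset.mem_insert.1 h with h | h
          · exact Or.inr h
          · exact Or.inl h) hn'
      obtain ⟨w', q1, q2⟩ := w.extend p1 p2
      subst q2
      exact p4 ((ihA h1 w' y (p3.1 (Finset.mem_insert_self _ _))).1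
        (h w' y q1 (p3.2.1 (Or.inr ⟨rfl, Or.inl rfl⟩))))
    · intro h w' e hw he
      have he' : (x, e) ∈ w'.cur.T.R := he
      have ok := w'.cok
      have hev := (ok.wf.rv _ _ he').2
      rw [ihA h1 w' e hev]
      exact ok.sat.closed _ _ hev h1 (Pv.boxL ((Wd.mono hw).2.2 h) he'
        (Pv.of_mem ok.wf.finR (Set.mem_insert _ _) (by simp)))

theorem kr_igl {F : Finset Formula} (hF : SubCl F) : PredIGL (kr F) := by
  refine ⟨fun w a b c h h' => w.cok.wf.tr a b c h h', ?_⟩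
  rintro ⟨f, g, h⟩
  have hm : ∀ n m, n ≤ m → (f n).l <+: (f m).l := by
    intro n m hnm
    induction m, hnm using Nat.le_induction with
    | base => exact List.prefix_rfl
    | succ m _ ih => exact ih.trans (h m).2.1
  have hr : ∀ n, (g n, g (n+1)) ∈ (f (n+1)).cur.T.R := fun n => (h n).2.2
  by_cases hB : ∀ k, ∃ n, k < (f n).l.length
  · choose ν hν using hB
    have key : ∀ n k (hk : k < (f n).l.length), (f n).l[k] = (f (ν k)).l[k]'(hν k) := by
      intro n k hk
      rcases le_total n (ν k) with hn | hn
      · exact List.IsPrefix.getElem (hm _ _ hn) hk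
      · exact (List.IsPrefix.getElem (hm _ _ hn) (hν k)).symm
    refine no_inf hF (fun k => (f (ν k)).l[k]'(hν k)) ?_ ?_ g ?_
    · intro k
      exact (f (ν k)).ok _ (List.getElem_mem _)
    · intro k
      have := List.isChain_iff_getElem.1 (f (ν (k+1))).ch k (hν (k+1))
      rw [← key (ν (k+1)) k (by have := hν (k+1); omega)]
      exact this
    · intro n
      refine ⟨(f (n+1)).l.length - 1, ?_⟩
      rw [← key (n+1), ← Wd.cur_eq]
      · exact hr n
      · have := List.length_pos_of_ne_nil (f (n+1)).ne
        omega
  · push Not at hB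
    obtain ⟨k, hk⟩ := hB
    have hb : BddAbove (Set.range fun n => (f n).l.length) := ⟨k, by rintro _ ⟨n, rfl⟩; exact hk n⟩
    obtain ⟨n0, hn0⟩ := Nat.sSup_mem (Set.range_nonempty fun n => (f n).l.length) hb
    have hmax : ∀ n, (f n).l.length ≤ (f n0).l.length := by
      intro n
      simp only at hn0
      rw [hn0]
      exact le_csSup hb ⟨n, rfl⟩
    have hle : ∀ n, (f n).cur.T.V ⊆ (f n0).cur.T.V := by
      intro n
      rcases le_total n n0 with hn | hn
      · exact (Wd.mono (hm _ _ hn)).1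
      · have e := List.IsPrefix.eq_of_length_le (hm _ _ hn) (hmax n)
        have : (f n).cur = (f n0).cur := by simp only [Wd.cur, e]
        rw [this]
    have hs : StrictMono g := strictMono_nat_of_lt_succ fun n => (f (n+1)).cok.wf.lt _ _ (hr n)
    have h1 := hle _ (h ((f n0).cur.T.V.sup id + 1)).1
    have h2 := Finset.le_sup (f := id) h1
    have h3 := hs.id_le ((f n0).cur.T.V.sup id + 1)
    simp only [id] at h2 h3
    change _ ≤ (f n0).cur.T.V.sup fun x => x at h2
    change (f n0).cur.T.V.sup (fun x => x) + 1 ≤ _ at h3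
    exact absurd (h3.trans h2) (Nat.not_succ_le_self _)

open Classical in
noncomputable def sub : Formula → Finset Formula
  | Formula.atom n => {Formula.atom n}
  | Formula.bot => {Formula.bot}
  | Formula.and A B => insert (Formula.and A B) (sub A ∪ sub B)
  | Formula.or A B => insert (Formula.or A B) (sub A ∪ sub B)
  | Formula.imp A B => insert (Formula.imp A B) (sub A ∪ sub B)
  | Formula.box A => insert (Formula.box A) (sub A)
  | Formula.dia A => insert (Formula.dia A) (sub A)

theorem sub_self (A : Formula) : A ∈ sub A := by cases A <;> simp [sub]

theorem SubCl.insert2 {F G : Finset Formula} (hF : SubCl F) (hG : SubCl G) [DecidableEq Formula] :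
    SubCl (F ∪ G) := by
  constructor
  all_goals simp only [Finset.mem_union]
  · rintro A B (h | h)
    · have := hF.and _ _ h; tauto
    · have := hG.and _ _ h; tauto
  · rintro A B (h | h)
    · have := hF.or _ _ h; tauto
    · have := hG.or _ _ h; tauto
  · rintro A B (h | h)
    · have := hF.imp _ _ h; tauto
    · have := hG.imp _ _ h; tauto
  · rintro A (h | h)
    · have := hF.box _ h; tauto
    · have := hG.box _ h; tauto
  · rintro A (h | h)
    · have := hF.dia _ h; tauto
    · have := hG.dia _ h; tauto

theorem sub_cl (A : Formula) : SubCl (sub A) := by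
  classical
  induction A with
  | atom p => constructor <;> simp [sub]
  | bot => constructor <;> simp [sub]
  | and A B ihA ihB =>
    have ih := ihA.insert2 ihB
    have hA := sub_self A
    have hB := sub_self B
    constructor
    all_goals simp only [sub, Finset.mem_insert]
    · rintro C D (h | h)
      · cases h; simp [hA, hB]
      · have := ih.and _ _ (by convert h); simp at this ⊢; tauto
    · rintro C D (h | h)
      · cases h
      · have := ih.or _ _ (by convert h); simp at this ⊢; tauto
    · rintro C D (h | h)
      · cases h
      · have := ih.imp _ _ (by convert h); simp at this ⊢; tauto
    · rintro C (h | h)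
      · cases h
      · have := ih.box _ (by convert h); simp at this ⊢; tauto
    · rintro C (h | h)
      · cases h
      · have := ih.dia _ (by convert h); simp at this ⊢; tauto
  | or A B ihA ihB =>
    have ih := ihA.insert2 ihB
    have hA := sub_self A
    have hB := sub_self B
    constructor
    all_goals simp only [sub, Finset.mem_insert]
    · rintro C D (h | h)
      · cases h
      · have := ih.and _ _ (by convert h); simp at this ⊢; tauto
    · rintro C D (h | h)
      · cases h; simp [hA, hB]
      · have := ih.or _ _ (by convert h); simp at this ⊢; tauto
    · rintro C D (h | h)
      · cases h
      · have := ih.imp _ _ (by convert h); simp at this ⊢; tauto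
    · rintro C (h | h)
      · cases h
      · have := ih.box _ (by convert h); simp at this ⊢; tauto
    · rintro C (h | h)
      · cases h
      · have := ih.dia _ (by convert h); simp at this ⊢; tauto
  | imp A B ihA ihB =>
    have ih := ihA.insert2 ihB
    have hA := sub_self A
    have hB := sub_self B
    constructor
    all_goals simp only [sub, Finset.mem_insert]
    · rintro C D (h | h)
      · cases h
      · have := ih.and _ _ (by convert h); simp at this ⊢; tauto
    · rintro C D (h | h)
      · cases h
      · have := ih.or _ _ (by convert h); simp at this ⊢; tauto
    · rintro C D (h | h)
      · cases h; simp [hA, hB]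
      · have := ih.imp _ _ (by convert h); simp at this ⊢; tauto
    · rintro C (h | h)
      · cases h
      · have := ih.box _ (by convert h); simp at this ⊢; tauto
    · rintro C (h | h)
      · cases h
      · have := ih.dia _ (by convert h); simp at this ⊢; tauto
  | box A ih =>
    have hA := sub_self A
    constructor
    all_goals simp only [sub, Finset.mem_insert]
    · rintro C D (h | h)
      · cases h
      · have := ih.and _ _ h; tauto
    · rintro C D (h | h)
      · cases h
      · have := ih.or _ _ h; tauto
    · rintro C D (h | h)
      · cases h
      · have := ih.imp _ _ h; tauto
    · rintro C (h | h)
      · cases h; exact Or.inr hA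
      · exact Or.inr (ih.box _ h)
    · rintro C (h | h)
      · cases h
      · exact Or.inr (ih.dia _ h)
  | dia A ih =>
    have hA := sub_self A
    constructor
    all_goals simp only [sub, Finset.mem_insert]
    · rintro C D (h | h)
      · cases h
      · have := ih.and _ _ h; tauto
    · rintro C D (h | h)
      · cases h
      · have := ih.or _ _ h; tauto
    · rintro C D (h | h)
      · cases h
      · have := ih.imp _ _ h; tauto
    · rintro C (h | h)
      · cases h
      · exact Or.inr (ih.box _ h)
    · rintro C (h | h)
      · cases h; exact Or.inr hA
      · exact Or.inr (ih.dia _ h)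

theorem exists_F (M : Multiset LFormula) : ∃ F, SubCl F ∧ ∀ a ∈ M, a.2 ∈ F := by
  classical
  induction M using Multiset.induction_on with
  | empty => exact ⟨∅, by constructor <;> simp, by simp⟩
  | cons a M ih =>
    obtain ⟨F, h1, h2⟩ := ih
    refine ⟨sub a.2 ∪ F, (sub_cl _).insert2 h1, ?_⟩
    intro b hb
    rcases Multiset.mem_cons.1 hb with rfl | hb
    · simp [sub_self]
    · simp [h2 b hb]

/-- **Countermodel construction.** If a labelled sequent has no ∞-proof in
mℓIK4 then there is a pred-IGL Kripke structure, a world and an environment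
making every formula on the left true and every formula on the right false. -/
theorem countermodel_construction (S : Sequent) (h : ¬ InfProof RuleMLIK4 S) :
    ∃ (W D : Type) (K : Kripke W D), Nonempty W ∧ PredIGL K ∧
      ∃ (w : W) (ρ : ℕ → D), (∀ v, ρ v ∈ K.Dom w) ∧
        (∀ x A, (x, A) ∈ S.left → ksat K w (ρ x) A) ∧
        (∀ x A, (x, A) ∈ S.right → ¬ ksat K w (ρ x) A) := by
  classical
  obtain ⟨F, hF, hS⟩ := exists_F (S.left + S.right)
  let V : Finset ℕ := insert 0 ((S.left + S.right).toFinset.image Prod.fst)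
  have hV : ∀ x A, (x, A) ∈ S.left + S.right → x ∈ V := by
    intro x A hx
    apply Finset.mem_insert_of_mem
    exact Finset.mem_image.2 ⟨(x, A), by rw [Multiset.mem_toFinset]; exact hx, rfl⟩
  have hP : ¬ Pv [] ∅ {a | a ∈ S.left} {a | a ∈ S.right} := by
    rintro ⟨n, Γ, Δ, hJ, h1, h2⟩
    exact h (inf_th S (J_sound (hJ.super h1 h2)))
  have hw : Wf F ⟨V, ∅, {a | a ∈ S.left}⟩ := by
    refine ⟨by simp, by simp, by simp, by simp, ?_⟩
    intro x A hx
    have : (x, A) ∈ S.left + S.right := Multiset.mem_add.2 (Or.inl hx)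
    exact ⟨hV x A this, hS _ this⟩
  have hfin : ({a | a ∈ S.right} : Set LFormula).Finite :=
    (S.right.toFinset.finite_toSet).subset (fun a ha => by
      rw [Finset.mem_coe, Multiset.mem_toFinset]; exact ha)
  obtain ⟨T, t1, t2, t3, t4⟩ := saturate hF [] _ hfin ⟨V, ∅, {a | a ∈ S.left}⟩ hw hP
    (fun x A hx => hV x A (Multiset.mem_add.2 (Or.inr hx)))
  have tle := (Steps.ext t1).1
  have hok : Ok F ⟨[], T⟩ := by
    refine ⟨t2, t3, ?_, tle.1 (Finset.mem_insert_self _ _), ?_, ?_⟩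
    · exact fun x hx => t4 (Pv.botL hx)
    · simp [topD]
    · intro j hj; simp [topD] at hj
  let w : Wd F := ⟨[⟨[], T⟩], by simp, by simp, by
    intro s hs; rw [List.mem_singleton] at hs; rw [hs]; exact hok⟩
  have hwc : w.cur = ⟨[], T⟩ := rfl
  have hρ : ∀ x A, (x, A) ∈ S.left + S.right → x ∈ T.V := fun x A hx => tle.1 (hV x A hx)
  refine ⟨Wd F, ℕ, kr F, ⟨w⟩, kr_igl hF, w, fun v => if v ∈ T.V then v else 0, ?_, ?_, ?_⟩
  · intro v
    change (if v ∈ T.V then v else 0) ∈ T.V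
    split_ifs with hv
    · exact hv
    · exact tle.1 (Finset.mem_insert_self _ _)
  · intro x A hx
    have hm : (x, A) ∈ S.left + S.right := Multiset.mem_add.2 (Or.inl hx)
    have hxT := hρ x A hm
    simp only [if_pos hxT]
    exact (truth hF A (hS _ hm) w x hxT).2 (tle.2.2 hx)
  · intro x A hx hk
    have hm : (x, A) ∈ S.left + S.right := Multiset.mem_add.2 (Or.inr hx)
    have hxT := hρ x A hm
    simp only [if_pos hxT] at hk
    exact t4 (Pv.of_mem t2.finR ((truth hF A (hS _ hm) w x hxT).1 hk) hx)

end IGL
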